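/- arXiv:1005.5090 — 2 statements merged into one kernel-verified Lean document; each statement's English description precedes it below -/
import Mathlib

section
/- Let n ≥ 3 and let K ⊆ ℝⁿ be a closed convex set with nonempty interior, K ≠ ℝⁿ, that is strictly convex and regular. Let δ : S^{n−1} → ℝ be continuous, H(u) = {x ∈ ℝⁿ : ⟨x, u⟩ = δ(u)}, and assume that for every u ∈ S^{n−1} the set frontier K ∩ H(u) is an (n−1)-dimensional convex quadric in H(u). Then there exist u₁, u₂ ∈ S^{n−1} such that frontier K ∩ H(u₁) and frontier K ∩ H(u₂) are (n−1)-dimensional ellipsoids whose intersection (frontier K ∩ H(u₁)) ∩ (frontier K ∩ H(u₂)) is an (n−2)-dimensional ellipsoid. -/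
open Set Metric RealInnerProductSpace

noncomputable section

/-- Euclidean n-space. -/
abbrev En (n : ℕ) := EuclideanSpace ℝ (Fin n)

/-- A quadric surface in ℝⁿ: the zero set of a quadratic polynomial whose quadratic
part (given by a symmetric matrix) is not identically zero. -/
def IsQuadricSurface {n : ℕ} (Q : Set (En n)) : Prop :=
  ∃ (a : Matrix (Fin n) (Fin n) ℝ) (b : Fin n → ℝ) (c : ℝ),
    a.IsSymm ∧ a ≠ 0 ∧
    Q = {x : En n | (∑ i, ∑ k, a i k * x i * x k) + 2 * (∑ i, b i * x i) + c = 0}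

/-- A real quadric surface: a nonempty quadric surface. -/
def IsRealQuadricSurface {n : ℕ} (Q : Set (En n)) : Prop :=
  IsQuadricSurface Q ∧ Q.Nonempty

/-- The set of connected components of a subset `F` of a topological space. -/
def componentsIn {α : Type*} [TopologicalSpace α] (F : Set α) : Set (Set α) :=
  {C | ∃ x ∈ F, C = connectedComponentIn F x}

/-- A convex quadric: the frontier of a convex connected component of the complement
of a real quadric surface. -/
def IsConvexQuadric {n : ℕ} (S : Set (En n)) : Prop :=
  ∃ Q U : Set (En n), IsRealQuadricSurface Q ∧ U ∈ componentsIn Qᶜ ∧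
    Convex ℝ U ∧ S = frontier U
/-- `S` is an (n−1)-dimensional convex quadric in the hyperplane `H ⊆ ℝⁿ`:
for some affine isometry φ : ℝ^{n−1} → ℝⁿ with image `H`, the set φ⁻¹(S) is a
convex quadric in ℝ^{n−1}. -/
def IsConvexQuadricIn {n : ℕ} (H S : Set (En n)) : Prop :=
  S ⊆ H ∧ ∃ φ : En (n - 1) →ᵃⁱ[ℝ] En n,
    Set.range (φ : En (n - 1) → En n) = H ∧ IsConvexQuadric ((φ : En (n - 1) → En n) ⁻¹' S)

/-- The hyperplane H(u) = {x : ⟨x, u⟩ = δ(u)} associated to a unit vector u. -/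
def sphHyp {n : ℕ} (δ : sphere (0 : En n) 1 → ℝ) (u : sphere (0 : En n) 1) : Set (En n) :=
  {x : En n | ⟪x, (u : En n)⟫ = δ u}
/-- `G` is a supporting hyperplane of `K` at the point `x`. -/
def IsSupportHyperplaneAt {n : ℕ} (K : Set (En n)) (x : En n) (G : Set (En n)) : Prop :=
  (∃ (v : En n) (c : ℝ), v ≠ 0 ∧ G = {y : En n | ⟪y, v⟫ = c}) ∧
    x ∈ G ∧ (G ∩ K).Nonempty ∧ G ∩ interior K = ∅

/-- `K` is strictly convex: its frontier contains no segment with distinct endpoints. -/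
def IsStrictlyConvexSet {n : ℕ} (K : Set (En n)) : Prop :=
  ∀ x ∈ frontier K, ∀ y ∈ frontier K, x ≠ y → ¬ segment ℝ x y ⊆ frontier K

/-- `K` is regular: every frontier point lies on exactly one supporting hyperplane. -/
def IsRegularSet {n : ℕ} (K : Set (En n)) : Prop :=
  ∀ x ∈ frontier K, ∃! G : Set (En n), IsSupportHyperplaneAt K x G
/-- A k-dimensional ellipsoid in ℝⁿ: the image of the unit sphere of ℝ^k under an
injective affine map ℝ^k → ℝⁿ. -/
def IsEllipsoidDim {n : ℕ} (k : ℕ) (S : Set (En n)) : Prop :=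
  ∃ f : En k →ᵃ[ℝ] En n, Function.Injective f ∧ S = f '' sphere (0 : En k) 1


open Filter Topology

/-- An unbounded closed convex set contains a ray from each of its points. -/
lemma exists_ray_aux {n : ℕ} {A : Set (En n)} (hc : Convex ℝ A) (hcl : IsClosed A)
    (hub : ¬ Bornology.IsBounded A) {x : En n} (hx : x ∈ A) :
    ∃ c : En n, ‖c‖ = 1 ∧ ∀ t : ℝ, 0 ≤ t → x + t • c ∈ A := by
  have h1 : ∀ k : ℕ, ∃ y ∈ A, (k : ℝ) + 1 < ‖y - x‖ := by
    intro k
    by_contra! h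
    apply hub
    refine (Metric.isBounded_closedBall (x := x) (r := (k : ℝ) + 1)).subset ?_
    intro y hy
    rw [mem_closedBall, dist_eq_norm]
    exact h y hy
  choose y hyA hy using h1
  have hpos : ∀ k, 0 < ‖y k - x‖ := fun k => lt_trans (by positivity) (hy k)
  have hs : ∀ k, (‖y k - x‖⁻¹ • (y k - x)) ∈ sphere (0 : En n) 1 := by
    intro k
    rw [mem_sphere_zero_iff_norm, norm_smul, norm_inv, norm_norm]
    exact inv_mul_cancel₀ (hpos k).ne'
  obtain ⟨c, hcs, ψ, hψ, hlim⟩ := (isCompact_sphere (0 : En n) 1).tendsto_subseq hs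
  refine ⟨c, by simpa using hcs, fun t ht => ?_⟩
  have hl : Tendsto (fun k => x + t • (‖y (ψ k) - x‖⁻¹ • (y (ψ k) - x))) atTop
      (𝓝 (x + t • c)) := (hlim.const_smul t).const_add x
  refine hcl.mem_of_tendsto hl ?_
  filter_upwards [eventually_ge_atTop ⌈t⌉₊] with k hk
  have h2 : t ≤ ‖y (ψ k) - x‖ := by
    have h3 : (⌈t⌉₊ : ℝ) ≤ (k : ℝ) := by exact_mod_cast hk
    have h4 : (k : ℝ) ≤ (ψ k : ℝ) := by exact_mod_cast hψ.id_le k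
    have h5 := hy (ψ k)
    have h6 := Nat.le_ceil t
    linarith
  have h7 := hc.add_smul_sub_mem hx (hyA (ψ k)) (t := t * ‖y (ψ k) - x‖⁻¹)
    ⟨by have := (hpos (ψ k)).le; positivity, by
      rw [← div_eq_mul_inv]; exact (div_le_one (hpos _)).2 h2⟩
  rwa [smul_smul]

/-- Recession directions do not depend on the base point. -/
lemma ray_shift_aux {n : ℕ} {K : Set (En n)} (hc : Convex ℝ K) (hcl : IsClosed K)
    {x p c : En n} (hp : p ∈ K) (hx : ∀ t : ℝ, 0 ≤ t → x + t • c ∈ K) :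
    ∀ t : ℝ, 0 ≤ t → p + t • c ∈ K := by
  intro t ht
  have hl : Tendsto (fun k : ℕ => p + (1 / ((k : ℝ) + 1)) • (x - p) + t • c) atTop
      (𝓝 (p + (0 : ℝ) • (x - p) + t • c)) :=
    ((tendsto_one_div_add_atTop_nhds_zero_nat.smul_const (x - p)).const_add p).add_const _
  rw [zero_smul, add_zero] at hl
  refine hcl.mem_of_tendsto hl (Eventually.of_forall fun k => ?_)
  have hk : (0 : ℝ) < (k : ℝ) + 1 := by positivity
  have h := hc.add_smul_sub_mem hp (hx (t * ((k : ℝ) + 1)) (by positivity))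
    (t := 1 / ((k : ℝ) + 1)) ⟨by positivity, by
      rw [div_le_one hk]; linarith [(Nat.cast_nonneg k : (0 : ℝ) ≤ k)]⟩
  convert h using 1
  have : t • c = (1 / ((k : ℝ) + 1)) • ((t * ((k : ℝ) + 1)) • c) := by
    rw [smul_smul]; congr 1; field_simp
  rw [this]
  module

/-- There is an open set of directions with bounded sections. -/
lemma exists_bounded_aux {n : ℕ} {K : Set (En n)} (hKconv : Convex ℝ K) (hKcl : IsClosed K)
    (hKint : (interior K).Nonempty) (hKne : K ≠ Set.univ)
    (hKsc : IsStrictlyConvexSet K) :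
    ∃ u₀ : sphere (0 : En n) 1, ∀ᶠ u : sphere (0 : En n) 1 in 𝓝 u₀,
      ∀ d : ℝ, Bornology.IsBounded (K ∩ {x | ⟪x, (u : En n)⟫ = d}) := by
  have hKn : K.Nonempty := hKint.mono interior_subset
  obtain ⟨p, hpf⟩ : (frontier K).Nonempty := by
    rw [nonempty_iff_ne_empty]
    intro h
    have hclo : IsClopen K := isClopen_iff_frontier_eq_empty.2 h
    rcases isClopen_iff.1 hclo with h | h
    · exact hKn.ne_empty h
    · exact hKne h
  have hpK : p ∈ K := hKcl.frontier_subset hpf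
  have hpi : p ∉ interior K := hpf.2
  obtain ⟨f, hf⟩ := geometric_hahn_banach_open_point hKconv.interior isOpen_interior hpi
  have hfK : ∀ x ∈ K, f x ≤ f p := by
    intro x hx
    have hx' : x ∈ closure (interior K) := by
      rw [hKconv.closure_interior_eq_closure_of_nonempty_interior hKint]
      exact subset_closure hx
    have hcl : IsClosed {x | f x ≤ f p} := isClosed_le f.continuous continuous_const
    exact closure_minimal (fun a ha => (hf a ha).le) hcl hx'
  have hfeq : ∀ x ∈ K, f x = f p → x = p := by
    intro x hx hxe
    by_contra hne
    have hfr : ∀ z ∈ K, f z = f p → z ∈ frontier K := by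
      intro z hz hze
      exact ⟨subset_closure hz, fun hzi => (hf z hzi).ne hze⟩
    refine hKsc x (hfr x hx hxe) p hpf hne ?_
    intro z hz
    refine hfr z (hKconv.segment_subset hx hpK hz) ?_
    obtain ⟨a, b, ha, hb, hab, rfl⟩ := hz
    rw [map_add, map_smul, map_smul, hxe, ← add_smul, hab, one_smul]
  set v : En n := -(InnerProductSpace.toDual ℝ (En n)).symm f with hv
  have hvf : ∀ x, ⟪x, v⟫ = - f x := by
    intro x
    rw [hv, inner_neg_right, real_inner_comm, InnerProductSpace.toDual_symm_apply]
  have hv0 : v ≠ 0 := by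
    intro h
    obtain ⟨a, ha⟩ := hKint
    have h1 := hf a ha
    have h2 := hvf a
    have h3 := hvf p
    rw [h, inner_zero_right] at h2 h3
    linarith
  set C : Set (En n) := {c | ∀ t : ℝ, 0 ≤ t → p + t • c ∈ K} ∩ sphere 0 1 with hC
  have hCc : IsCompact C := by
    refine (isCompact_sphere (0 : En n) 1).inter_left ?_
    have : {c : En n | ∀ t : ℝ, 0 ≤ t → p + t • c ∈ K}
        = ⋂ (t : ℝ) (_ : 0 ≤ t), (fun c : En n => p + t • c) ⁻¹' K := by
      ext c; simp
    rw [this]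
    exact isClosed_iInter fun t => isClosed_iInter fun _ => hKcl.preimage (by fun_prop)
  have hCpos : ∀ c ∈ C, 0 < ⟪c, v⟫ := by
    rintro c ⟨hc, hc1⟩
    have h1 : p + c ∈ K := by simpa using hc 1 zero_le_one
    have hc0 : c ≠ 0 := by
      rintro rfl
      simp at hc1
    have h2 := hfK _ h1
    have h3 : f (p + c) ≠ f p := fun h => hc0 (by simpa using hfeq _ h1 h)
    have h4 := lt_of_le_of_ne h2 h3
    rw [map_add] at h4
    rw [hvf]
    linarith
  have hm : ∃ m > 0, ∀ c ∈ C, m ≤ ⟪c, v⟫ := by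
    rcases C.eq_empty_or_nonempty with h | h
    · exact ⟨1, one_pos, by simp [h]⟩
    · obtain ⟨c, hc, hmin⟩ := hCc.exists_isMinOn h
        (f := fun c => ⟪c, v⟫) (Continuous.continuousOn (by fun_prop))
      exact ⟨_, hCpos c hc, fun c' hc' => hmin hc'⟩
  obtain ⟨m, hm0, hm⟩ := hm
  have hvn : 0 < ‖v‖ := norm_pos_iff.2 hv0
  refine ⟨⟨‖v‖⁻¹ • v, ?_⟩, ?_⟩
  · rw [mem_sphere_zero_iff_norm, norm_smul, norm_inv, norm_norm]
    exact inv_mul_cancel₀ hvn.ne'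
  refine Metric.eventually_nhds_iff.2 ⟨‖v‖⁻¹ * m, by positivity, ?_⟩
  intro u hu d
  by_contra hub
  have hne : (K ∩ {x | ⟪x, (u : En n)⟫ = d}).Nonempty := by
    rw [nonempty_iff_ne_empty]
    intro h
    rw [h] at hub
    exact hub Bornology.isBounded_empty
  obtain ⟨x, hx⟩ := hne
  have hHconv : Convex ℝ {x : En n | ⟪x, (u : En n)⟫ = d} := by
    intro x hx y hy a b _ _ hab
    simp only [mem_ofPred_eq] at *
    rw [inner_add_left, real_inner_smul_left, real_inner_smul_left, hx, hy, ← add_mul, hab, one_mul]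
  have hHcl : IsClosed {x : En n | ⟪x, (u : En n)⟫ = d} :=
    isClosed_eq (by fun_prop) continuous_const
  obtain ⟨c, hc1, hc⟩ := exists_ray_aux (hKconv.inter hHconv) (hKcl.inter hHcl) hub hx
  have hcC : c ∈ C := ⟨ray_shift_aux hKconv hKcl hpK fun t ht => (hc t ht).1, by simpa using hc1⟩
  have hcu : ⟪c, (u : En n)⟫ = 0 := by
    have h1 := (hc 1 zero_le_one).2
    have h2 := hx.2
    simp only [mem_ofPred_eq, one_smul, inner_add_left] at h1 h2
    linarith
  have h1 := hm c hcC
  have h2 : ⟪c, ‖v‖⁻¹ • v - (u : En n)⟫ ≤ ‖c‖ * ‖‖v‖⁻¹ • v - (u : En n)‖ := real_inner_le_norm _ _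
  rw [inner_sub_right, hcu, real_inner_smul_right, hc1, one_mul, sub_zero] at h2
  have h3 : ‖‖v‖⁻¹ • v - (u : En n)‖ < ‖v‖⁻¹ * m := by
    rw [← dist_eq_norm, dist_comm]; exact hu
  have h4 : ‖v‖⁻¹ * m ≤ ‖v‖⁻¹ * ⟪c, v⟫ := by gcongr
  linarith

/-- Two nearby independent directions whose hyperplanes meet inside the interior. -/
lemma two_dirs_aux {n : ℕ} (hn : 3 ≤ n) {O : Set (En n)} (hO : IsOpen O)
    (δ : sphere (0 : En n) 1 → ℝ) (hδ : Continuous δ) (u₀ : sphere (0 : En n) 1)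
    {p : En n} (hp : p ∈ O) (hpu : ⟪p, (u₀ : En n)⟫ = δ u₀)
    {P : sphere (0 : En n) 1 → Prop} (hP : ∀ᶠ u in 𝓝 u₀, P u) :
    ∃ u₁ u₂ : sphere (0 : En n) 1, P u₁ ∧ P u₂ ∧
      (∃ z ∈ O, ⟪z, (u₁ : En n)⟫ = δ u₁ ∧ ⟪z, (u₂ : En n)⟫ = δ u₂) ∧
      ∃ w : En n, ⟪w, (u₁ : En n)⟫ = 0 ∧ ⟪w, (u₂ : En n)⟫ ≠ 0 := by
  have hu0n : ‖(u₀ : En n)‖ = 1 := by simpa using u₀.2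
  have hu00 : ⟪(u₀ : En n), (u₀ : En n)⟫ = 1 := by
    rw [real_inner_self_eq_norm_sq, hu0n]; norm_num
  -- an orthonormal pair orthogonal to u₀
  obtain ⟨w₁, w₂, h01, h02, h11, h22, h12⟩ : ∃ w₁ w₂ : En n, ⟪(u₀ : En n), w₁⟫ = 0 ∧
      ⟪(u₀ : En n), w₂⟫ = 0 ∧ ⟪w₁, w₁⟫ = 1 ∧ ⟪w₂, w₂⟫ = 1 ∧ ⟪w₁, w₂⟫ = 0 := by
    have hne : (u₀ : En n) ≠ 0 := by intro h; rw [h] at hu0n; simp at hu0n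
    have hfr : Module.finrank ℝ ((Submodule.span ℝ {(u₀ : En n)})ᗮ : Submodule ℝ (En n)) = n - 1 := by
      have h1 := Submodule.finrank_add_finrank_orthogonal (Submodule.span ℝ {(u₀ : En n)})
      rw [finrank_span_singleton hne, finrank_euclideanSpace_fin] at h1
      omega
    let b := stdOrthonormalBasis ℝ ((Submodule.span ℝ {(u₀ : En n)})ᗮ : Submodule ℝ (En n))
    have hb := b.orthonormal
    let i : Fin (Module.finrank ℝ ((Submodule.span ℝ {(u₀ : En n)})ᗮ : Submodule ℝ (En n))) :=
      ⟨0, by omega⟩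
    let j : Fin (Module.finrank ℝ ((Submodule.span ℝ {(u₀ : En n)})ᗮ : Submodule ℝ (En n))) :=
      ⟨1, by omega⟩
    have hij : i ≠ j := by simp [i, j]
    have hself : ∀ k, ⟪((b k : _) : En n), (b k : En n)⟫ = 1 := by
      intro k
      have h1 := hb.1 k
      rw [Submodule.coe_norm] at h1
      rw [real_inner_self_eq_norm_sq, h1]; norm_num
    refine ⟨b i, b j, ?_, ?_, hself i, hself j, ?_⟩
    · exact Submodule.mem_orthogonal_singleton_iff_inner_right.1 (b i).2
    · exact Submodule.mem_orthogonal_singleton_iff_inner_right.1 (b j).2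
    · exact hb.2 hij
  have h10 : ⟪w₁, (u₀ : En n)⟫ = 0 := by rw [real_inner_comm]; exact h01
  have h20 : ⟪w₂, (u₀ : En n)⟫ = 0 := by rw [real_inner_comm]; exact h02
  have h21 : ⟪w₂, w₁⟫ = 0 := by rw [real_inner_comm]; exact h12
  obtain ⟨ε, hε, hball⟩ := Metric.isOpen_iff.1 hO p hp
  let s : sphere (0 : En n) 1 → ℝ := fun u => (δ u - ⟪p, (u : En n)⟫) / ⟪(u₀ : En n), (u : En n)⟫
  have hs0 : s u₀ = 0 := by simp [s, hpu]
  have hsc : ContinuousAt s u₀ := by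
    refine ContinuousAt.div ?_ ?_ ?_
    · fun_prop
    · fun_prop
    · rw [hu00]; norm_num
  have hev : ∀ᶠ u in 𝓝 u₀, P u ∧ |s u| < ε := by
    refine hP.and ?_
    have h1 : ContinuousAt (fun u => |s u|) u₀ := hsc.abs
    refine h1.eventually (gt_mem_nhds ?_) |>.mono fun u hu => hu
    simpa [hs0] using hε
  obtain ⟨η, hη, hηP⟩ := Metric.eventually_nhds_iff.1 hev
  -- choose the angle
  obtain ⟨r, hr0, hrpi, hrη⟩ : ∃ r : ℝ, 0 < r ∧ r < Real.pi / 2 ∧ 2 - 2 * Real.cos r < η ^ 2 := by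
    have h1 : ∀ᶠ r in 𝓝 (0 : ℝ), 2 - 2 * Real.cos r < η ^ 2 := by
      have : ContinuousAt (fun r : ℝ => 2 - 2 * Real.cos r) 0 := by fun_prop
      refine this.eventually (gt_mem_nhds ?_)
      simp; positivity
    have h2 : ∀ᶠ r in 𝓝 (0 : ℝ), r < Real.pi / 2 := gt_mem_nhds (by positivity)
    have h3 : ∀ᶠ r in 𝓝[>] (0 : ℝ), 0 < r := eventually_mem_nhdsWithin
    obtain ⟨r, ⟨ha, hb⟩, hc⟩ := (((h1.and h2).filter_mono nhdsWithin_le_nhds).and h3).exists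
    exact ⟨r, hc, hb, ha⟩
  have hcr : 0 < Real.cos r := Real.cos_pos_of_mem_Ioo ⟨by linarith, hrpi⟩
  have hsr : 0 < Real.sin r := Real.sin_pos_of_pos_of_lt_pi hr0 (by linarith [Real.pi_pos])
  have hcs := Real.sin_sq_add_cos_sq r
  let W : ℝ → En n := fun θ => Real.cos θ • w₁ + Real.sin θ • w₂
  have hWW : ∀ θ, ⟪W θ, W θ⟫ = 1 := by
    intro θ
    simp only [W, inner_add_left, inner_add_right, real_inner_smul_left, real_inner_smul_right,
      h11, h22, h12, h21]
    have := Real.sin_sq_add_cos_sq θ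
    linarith
  have hW0 : ∀ θ, ⟪W θ, (u₀ : En n)⟫ = 0 := by
    intro θ
    simp only [W, inner_add_left, real_inner_smul_left, h10, h20]
    ring
  have h0W : ∀ θ, ⟪(u₀ : En n), W θ⟫ = 0 := by
    intro θ; rw [real_inner_comm]; exact hW0 θ
  let γ : ℝ → En n := fun θ => Real.cos r • (u₀ : En n) + Real.sin r • W θ
  have hγ1 : ∀ θ, γ θ ∈ sphere (0 : En n) 1 := by
    intro θ
    rw [mem_sphere_zero_iff_norm]
    have : ‖γ θ‖ ^ 2 = 1 := by
      rw [← real_inner_self_eq_norm_sq]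
      simp only [γ, inner_add_left, inner_add_right, real_inner_smul_left, real_inner_smul_right,
        hu00, hWW, hW0, h0W]
      linarith
    have h2 := norm_nonneg (γ θ)
    nlinarith
  let g : ℝ → sphere (0 : En n) 1 := fun θ => ⟨γ θ, hγ1 θ⟩
  have hgc : Continuous g := by
    refine Continuous.subtype_mk ?_ _
    simp only [γ, W]
    fun_prop
  have hgu : ∀ θ, ⟪(u₀ : En n), (g θ : En n)⟫ = Real.cos r := by
    intro θ
    simp only [g, γ, inner_add_right, real_inner_smul_right, hu00, h0W]
    ring
  have hgd : ∀ θ, dist (g θ) u₀ < η := by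
    intro θ
    have h1 : dist (g θ) u₀ ^ 2 = 2 - 2 * Real.cos r := by
      rw [Subtype.dist_eq, dist_eq_norm, norm_sub_sq_real, hu0n, real_inner_comm, hgu]
      have : ‖(g θ : En n)‖ = 1 := by simpa using (g θ).2
      rw [this]; ring
    exact lt_of_pow_lt_pow_left₀ 2 hη.le (by rw [h1]; exact hrη)
  have hscont : Continuous fun θ => s (g θ) := by
    simp only [s]
    refine Continuous.div ?_ ?_ ?_
    · fun_prop
    · fun_prop
    · intro θ; rw [hgu]; exact hcr.ne'
  let G : ℝ → ℝ := fun θ => s (g θ) - s (g (θ + Real.pi))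
  have hGc : Continuous G := by
    simp only [G]
    exact hscont.sub (hscont.comp (continuous_id.add continuous_const))
  have hg2 : g (0 + Real.pi + Real.pi) = g 0 := by
    apply Subtype.ext
    simp [g, γ, W]
  have hGpi : G (0 + Real.pi) = - G 0 := by
    simp only [G, hg2]; ring
  obtain ⟨θ, hθ⟩ : ∃ θ, G θ = 0 := by
    have : (0 : ℝ) ∈ Set.range G := by
      rcases le_total (G 0) 0 with h | h
      · exact mem_range_of_exists_le_of_exists_ge hGc ⟨0, h⟩ ⟨0 + Real.pi, by rw [hGpi]; linarith⟩
      · exact mem_range_of_exists_le_of_exists_ge hGc ⟨0 + Real.pi, by rw [hGpi]; linarith⟩ ⟨0, h⟩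
    exact this
  have hst : s (g θ) = s (g (θ + Real.pi)) := by simp only [G] at hθ; linarith
  have hmeet : ∀ θ', ⟪p + s (g θ') • (u₀ : En n), (g θ' : En n)⟫ = δ (g θ') := by
    intro θ'
    rw [inner_add_left, real_inner_smul_left]
    simp only [s]
    rw [hgu]
    field_simp
    ring
  refine ⟨g θ, g (θ + Real.pi), (hηP (hgd _)).1, (hηP (hgd _)).1,
    ⟨p + s (g θ) • (u₀ : En n), ?_, hmeet θ, ?_⟩,
    Real.sin r • (u₀ : En n) - Real.cos r • W θ, ?_, ?_⟩
  · apply hball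
    rw [mem_ball, dist_eq_norm, add_sub_cancel_left, norm_smul, hu0n, mul_one]
    exact (hηP (hgd θ)).2
  · rw [hst]; exact hmeet _
  · simp only [g, γ, inner_add_right, inner_sub_left, real_inner_smul_left, real_inner_smul_right,
        hu00, hWW, hW0, h0W]
    ring
  · have hWpi : W (θ + Real.pi) = - W θ := by
      simp only [W, Real.cos_add_pi, Real.sin_add_pi]; module
    simp only [g, γ, hWpi, inner_neg_right, inner_add_right, inner_sub_left, real_inner_smul_left,
      real_inner_smul_right, hu00, hWW, hW0, h0W]
    have := mul_pos hsr hcr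
    nlinarith

/-- A preconnected set meeting a set and its complement meets the frontier. -/
lemma inter_frontier_aux {n : ℕ} {t : Set (En n)} (ht : IsPreconnected t) (s : Set (En n))
    (h1 : (t ∩ s).Nonempty) (h2 : (t ∩ sᶜ).Nonempty) : (t ∩ frontier s).Nonempty := by
  by_contra! h
  have hnf : ∀ x ∈ t, x ∉ frontier s := by
    intro x hx hxf
    have : x ∈ t ∩ frontier s := ⟨hx, hxf⟩
    rw [h] at this
    exact this
  obtain ⟨a, hat, has⟩ := h1
  obtain ⟨b, hbt, hbs⟩ := h2
  obtain ⟨z, -, hz1, hz2⟩ := ht (interior s) (closure s)ᶜ isOpen_interior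
    isClosed_closure.isOpen_compl (by
      intro x hx
      by_cases hxc : x ∈ closure s
      · left
        by_contra hxi
        exact hnf x hx ⟨hxc, hxi⟩
      · right; exact hxc)
    ⟨a, hat, by_contra fun hi => hnf a hat ⟨subset_closure has, hi⟩⟩
    ⟨b, hbt, fun hc => hnf b hbt ⟨hc, fun hi => hbs (interior_subset hi)⟩⟩
  exact hz2 (subset_closure (interior_subset hz1))

/-- A convex quadric has two distinct points and lies on a quadric given by a nonzero
symmetric bilinear form. -/
lemma quadric_aux {m : ℕ} (hm : 2 ≤ m) {S : Set (En m)} (hS : IsConvexQuadric S) :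
    (∃ x ∈ S, ∃ y ∈ S, x ≠ y) ∧
    ∃ (B : LinearMap.BilinForm ℝ (En m)) (l : En m →ₗ[ℝ] ℝ) (c : ℝ),
      (∀ x y, B x y = B y x) ∧ B ≠ 0 ∧ ∀ x ∈ S, B x x + 2 * l x + c = 0 := by
  obtain ⟨Q, U, ⟨⟨a, b, c, hsym, ha, hQ⟩, hQne⟩, ⟨x₀, hx₀, hU⟩, hconv, rfl⟩ := hS
  have hQcl : IsClosed Q := by
    rw [hQ]
    exact isClosed_eq (by fun_prop) continuous_const
  have hUo : IsOpen U := by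
    rw [hU]; exact hQcl.isOpen_compl.connectedComponentIn
  have hx₀U : x₀ ∈ U := by rw [hU]; exact mem_connectedComponentIn hx₀
  have hUQ : U ⊆ Qᶜ := by rw [hU]; exact connectedComponentIn_subset _ _
  have hfU : ∀ y ∈ frontier U, y ∉ U := by
    intro y hy
    rw [hUo.frontier_eq] at hy
    exact hy.2
  have hfQ : ∀ y ∈ frontier U, y ∈ Q := by
    intro y hy
    by_contra hyQ
    have hVo : IsOpen (connectedComponentIn Qᶜ y) := hQcl.isOpen_compl.connectedComponentIn
    have hyV : y ∈ connectedComponentIn Qᶜ y := mem_connectedComponentIn hyQ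
    obtain ⟨z, hzV, hzU⟩ := mem_closure_iff.1 hy.1 _ hVo hyV
    rw [hU] at hzU
    have h1 := connectedComponentIn_eq hzU
    have h2 := connectedComponentIn_eq hzV
    apply hfU y hy
    rw [hU, h1, ← h2]
    exact hyV
  obtain ⟨q, hq⟩ := hQne
  have hqU : q ∉ U := fun h => hUQ h hq
  have hrank : 1 < Module.rank ℝ (En m) := by
    rw [← Module.finrank_eq_rank, finrank_euclideanSpace_fin]
    exact_mod_cast hm
  constructor
  · obtain ⟨x, -, hx⟩ := inter_frontier_aux (isPreconnected_univ (α := En m)) U ⟨x₀, trivial, hx₀U⟩ ⟨q, trivial, hqU⟩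
    by_contra! h
    have hfx : ∀ y ∈ frontier U, y = x := fun y hy => (h x hx y hy).symm
    have hcon : IsPreconnected ({x}ᶜ : Set (En m)) :=
      (isConnected_compl_singleton_of_one_lt_rank hrank x).isPreconnected
    have hx₀x : x₀ ≠ x := by rintro rfl; exact hfU _ hx hx₀U
    have hsub : ({x}ᶜ : Set (En m)) ⊆ U := by
      intro y hy
      by_contra hyU
      obtain ⟨z, hz, hz'⟩ := inter_frontier_aux hcon U ⟨x₀, hx₀x, hx₀U⟩ ⟨y, hy, hyU⟩
      exact hz (hfx z hz')
    have h2 : x + (x - x₀) ∈ U := by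
      apply hsub
      intro h
      apply hx₀x
      have h3 : x - x₀ = 0 := by simpa using h
      exact (sub_eq_zero.1 h3).symm
    have h3 := hconv hx₀U h2 (a := 1 / 2) (b := 1 / 2) (by norm_num) (by norm_num) (by norm_num)
    apply hfU x hx
    convert h3 using 1
    module
  · refine ⟨LinearMap.mk₂ ℝ (fun x y : En m => ∑ i, ∑ k, a i k * x i * y k) ?_ ?_ ?_ ?_,
      { toFun := fun x => ∑ i, b i * x i, map_add' := ?_, map_smul' := ?_ }, c, ?_, ?_, ?_⟩
    · intro x y z
      simp only [PiLp.add_apply, mul_add, add_mul, Finset.sum_add_distrib]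
    · intro r x y
      simp only [PiLp.smul_apply, smul_eq_mul, Finset.mul_sum]
      refine Finset.sum_congr rfl fun i _ => Finset.sum_congr rfl fun k _ => by ring
    · intro x y z
      simp only [PiLp.add_apply, mul_add, add_mul, Finset.sum_add_distrib]
    · intro r x y
      simp only [PiLp.smul_apply, smul_eq_mul, Finset.mul_sum]
      refine Finset.sum_congr rfl fun i _ => Finset.sum_congr rfl fun k _ => by ring
    · intro x y
      simp only [PiLp.add_apply, mul_add, Finset.sum_add_distrib]
    · intro r x
      simp only [PiLp.smul_apply, smul_eq_mul, Finset.mul_sum, RingHom.id_apply]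
      refine Finset.sum_congr rfl fun i _ => by ring
    · intro x y
      simp only [LinearMap.mk₂_apply]
      rw [Finset.sum_comm]
      refine Finset.sum_congr rfl fun i _ => Finset.sum_congr rfl fun k _ => ?_
      rw [hsym.apply i k]; ring
    · intro h0
      apply ha
      ext i k
      have h1 := LinearMap.congr_fun₂ h0 (EuclideanSpace.single i 1) (EuclideanSpace.single k 1)
      simpa [LinearMap.mk₂_apply, Finset.sum_ite_eq, Pi.single_apply] using h1
    · intro x hx
      have h1 := hfQ x hx
      rw [hQ] at h1
      exact h1

/-- A ray inside a bounded section leaves `K` through its frontier. -/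
lemma exit_aux {n : ℕ} {K : Set (En n)} {u : En n} {d : ℝ}
    (hbd : Bornology.IsBounded (K ∩ {x | ⟪x, u⟫ = d})) {p v : En n}
    (hp : p ∈ interior K) (hpd : ⟪p, u⟫ = d) (hv : v ≠ 0) (hvu : ⟪v, u⟫ = 0) :
    ∃ t : ℝ, 0 < t ∧ p + t • v ∈ frontier K := by
  have hin : ∀ t : ℝ, ⟪p + t • v, u⟫ = d := by
    intro t
    rw [inner_add_left, real_inner_smul_left, hvu, hpd]; ring
  have hpre : IsPreconnected ((fun t : ℝ => p + t • v) '' Ici 0) :=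
    isPreconnected_Ici.image _ (Continuous.continuousOn (by fun_prop))
  obtain ⟨R, hR⟩ := hbd.subset_closedBall p
  have hvn : 0 < ‖v‖ := norm_pos_iff.2 hv
  obtain ⟨z, ⟨t, ht, rfl⟩, hz⟩ := inter_frontier_aux hpre K
    ⟨p, ⟨0, by simp, by simp⟩, interior_subset hp⟩ (by
      refine ⟨p + ((|R| + 1) / ‖v‖) • v, ⟨_, ?_, rfl⟩, ?_⟩
      · simp only [mem_Ici]; positivity
      · intro hK
        have := hR ⟨hK, hin _⟩
        rw [mem_closedBall, dist_eq_norm, add_sub_cancel_left, norm_smul, Real.norm_eq_abs,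
          abs_of_nonneg (by positivity), div_mul_cancel₀ _ hvn.ne'] at this
        linarith [le_abs_self R])
  refine ⟨t, lt_of_le_of_ne ht ?_, hz⟩
  rintro rfl
  simp at hz
  exact hz.2 hp

/-- A bounded section is a definite quadric. -/
lemma section_aux {n m : ℕ} {K : Set (En n)} {u : En n} {d : ℝ}
    (hbd : Bornology.IsBounded (K ∩ {x | ⟪x, u⟫ = d}))
    (φ : En m →ᵃⁱ[ℝ] En n) (hφ : Set.range φ = {x | ⟪x, u⟫ = d})
    (hmeets : ∃ p ∈ interior K, ⟪p, u⟫ = d)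
    (B : LinearMap.BilinForm ℝ (En m)) (l : En m →ₗ[ℝ] ℝ) (c : ℝ)
    (hsym : ∀ x y, B x y = B y x) (hB : B ≠ 0)
    (hS : ∀ x, φ x ∈ frontier K → B x x + 2 * l x + c = 0) :
    ∃ (B : LinearMap.BilinForm ℝ (En m)) (l : En m →ₗ[ℝ] ℝ) (c : ℝ),
      (∀ x y, B x y = B y x) ∧ (∀ v, v ≠ 0 → 0 < B v v) ∧
      (∀ x, φ x ∈ frontier K ↔ B x x + 2 * l x + c = 0) ∧
      (∀ x, φ x ∈ interior K → B x x + 2 * l x + c < 0) := by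
  have hφd : ∀ x, ⟪φ x, u⟫ = d := by
    intro x
    have : φ x ∈ Set.range φ := ⟨x, rfl⟩
    rw [hφ] at this
    exact this
  have hφv : ∀ (x v : En m) (t : ℝ), φ (x + t • v) = φ x + t • φ.linearIsometry v := by
    intro x v t
    have := φ.map_vadd x (t • v)
    rw [vadd_eq_add, vadd_eq_add, map_smul] at this
    rw [add_comm x, this, add_comm]
  have hlin : ∀ v, ⟪φ.linearIsometry v, u⟫ = 0 := by
    intro v
    have h1 := hφd (0 + (1 : ℝ) • v)
    rw [hφv, inner_add_left, hφd, one_smul] at h1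
    linarith
  have hexit : ∀ x v, φ x ∈ interior K → v ≠ 0 → ∃ t : ℝ, 0 < t ∧ φ (x + t • v) ∈ frontier K := by
    intro x v hx hv
    obtain ⟨t, ht, h⟩ := exit_aux hbd hx (hφd x) (v := φ.linearIsometry v)
      (by rwa [Ne, map_eq_zero_iff _ φ.linearIsometry.injective]) (hlin v)
    exact ⟨t, ht, by rwa [hφv]⟩
  have hexp : ∀ (B : LinearMap.BilinForm ℝ (En m)) (l : En m →ₗ[ℝ] ℝ) (c : ℝ),
      (∀ x y, B x y = B y x) → ∀ (x v : En m) (t : ℝ),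
      B (x + t • v) (x + t • v) + 2 * l (x + t • v) + c
        = B v v * t ^ 2 + 2 * (B x v + l v) * t + (B x x + 2 * l x + c) := by
    intro B l c hsym x v t
    simp only [map_add, map_smul, LinearMap.add_apply, LinearMap.smul_apply, smul_eq_mul]
    rw [hsym v x]
    ring
  -- the product of the two roots along every line
  have hroots : ∀ (B : LinearMap.BilinForm ℝ (En m)) (l : En m →ₗ[ℝ] ℝ) (c : ℝ),
      (∀ x y, B x y = B y x) → (∀ x, φ x ∈ frontier K → B x x + 2 * l x + c = 0) →
      ∀ x v, φ x ∈ interior K → v ≠ 0 → ∃ s > 0, B x x + 2 * l x + c = - s * B v v := by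
    intro B l c hsym hS x v hx hv
    obtain ⟨t, ht, h1⟩ := hexit x v hx hv
    obtain ⟨s, hs, h2⟩ := hexit x (-v) hx (neg_ne_zero.2 hv)
    have e1 := hS _ h1
    have e2 := hS _ h2
    rw [hexp B l c hsym] at e1 e2
    simp only [map_neg, LinearMap.neg_apply, neg_neg] at e2
    refine ⟨t * s, mul_pos ht hs, ?_⟩
    have hts : t + s ≠ 0 := by positivity
    have : (t + s) * ((B x x + 2 * l x + c) + t * s * B v v) = 0 := by
      linear_combination s * e1 + t * e2
    rcases mul_eq_zero.1 this with h | h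
    · exact absurd h hts
    · linarith
  obtain ⟨p, hpK, hpd⟩ := hmeets
  obtain ⟨y₀, rfl⟩ : p ∈ Set.range φ := by rw [hφ]; exact hpd
  -- the definite case
  have key : ∀ (B : LinearMap.BilinForm ℝ (En m)) (l : En m →ₗ[ℝ] ℝ) (c : ℝ),
      (∀ x y, B x y = B y x) → (∀ x, φ x ∈ frontier K → B x x + 2 * l x + c = 0) →
      B y₀ y₀ + 2 * l y₀ + c < 0 →
      ∃ (B : LinearMap.BilinForm ℝ (En m)) (l : En m →ₗ[ℝ] ℝ) (c : ℝ),
      (∀ x y, B x y = B y x) ∧ (∀ v, v ≠ 0 → 0 < B v v) ∧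
      (∀ x, φ x ∈ frontier K ↔ B x x + 2 * l x + c = 0) ∧
      (∀ x, φ x ∈ interior K → B x x + 2 * l x + c < 0) := by
    intro B l c hsym hS hneg
    have hpos : ∀ v, v ≠ 0 → 0 < B v v := by
      intro v hv
      obtain ⟨s, hs, h⟩ := hroots B l c hsym hS y₀ v hpK hv
      by_contra! hle
      nlinarith
    refine ⟨B, l, c, hsym, hpos, fun x => ⟨hS x, fun hx => ?_⟩, fun x hx => ?_⟩
    · have hne : x - y₀ ≠ 0 := by
        intro h
        rw [sub_eq_zero] at h
        rw [h] at hx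
        linarith
      obtain ⟨t, ht, h1⟩ := hexit y₀ (x - y₀) hpK hne
      have e1 := hS _ h1
      have e2 : B (y₀ + (1 : ℝ) • (x - y₀)) (y₀ + (1 : ℝ) • (x - y₀))
          + 2 * l (y₀ + (1 : ℝ) • (x - y₀)) + c = 0 := by
        rw [one_smul, add_sub_cancel]; exact hx
      rw [hexp B l c hsym] at e1 e2
      have hα := hpos _ hne
      have h3 : (t - 1) * (B (x - y₀) (x - y₀) * t - (B y₀ y₀ + 2 * l y₀ + c)) = 0 := by
        linear_combination e1 - t * e2
      have h4 : 0 < B (x - y₀) (x - y₀) * t - (B y₀ y₀ + 2 * l y₀ + c) := by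
        have := mul_pos hα ht
        linarith
      have h5 : t = 1 := by
        rcases mul_eq_zero.1 h3 with h | h
        · linarith
        · linarith
      rw [h5, one_smul, add_sub_cancel] at h1
      exact h1
    · by_cases hxy : x = y₀
      · rw [hxy]; exact hneg
      · obtain ⟨s, hs, h⟩ := hroots B l c hsym hS x (x - y₀) hx (sub_ne_zero.2 hxy)
        have := mul_pos hs (hpos _ (sub_ne_zero.2 hxy))
        linarith
  rcases lt_trichotomy (B y₀ y₀ + 2 * l y₀ + c) 0 with h | h | h
  · exact key B l c hsym hS h
  · exfalso
    apply hB
    have hz : ∀ v, B v v = 0 := by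
      intro v
      by_cases hv : v = 0
      · simp [hv]
      · obtain ⟨s, hs, h'⟩ := hroots B l c hsym hS y₀ v hpK hv
        rw [h] at h'
        have : s * B v v = 0 := by linarith
        exact (mul_eq_zero.1 this).resolve_left hs.ne'
    ext x y
    have h1 := hz (x + y)
    simp only [map_add, LinearMap.add_apply, hz, hsym y x] at h1
    simp only [LinearMap.zero_apply]
    linarith
  · refine key (-B) (-l) (-c) ?_ ?_ ?_
    · intro x y; simp [hsym x y]
    · intro x hx
      have := hS x hx
      simp only [LinearMap.neg_apply]
      linarith
    · simp only [LinearMap.neg_apply]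
      linarith

/-- A definite quadric with a point inside is an ellipsoid. -/
lemma ellipsoid_aux {V : Type*} [AddCommGroup V] [Module ℝ V] [FiniteDimensional ℝ V] {k : ℕ}
    (hk : Module.finrank ℝ V = k) (B : LinearMap.BilinForm ℝ V) (l : V →ₗ[ℝ] ℝ) (c : ℝ)
    (hsym : ∀ x y, B x y = B y x) (hpos : ∀ v, v ≠ 0 → 0 < B v v)
    (x₀ : V) (hx₀ : B x₀ x₀ + 2 * l x₀ + c < 0) :
    ∃ f : En k →ᵃ[ℝ] V, Function.Injective f ∧
      {x | B x x + 2 * l x + c = 0} = f '' sphere (0 : En k) 1 := by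
  subst hk
  obtain ⟨b, hb⟩ := LinearMap.BilinForm.exists_orthogonal_basis (B := B) ⟨fun x y => hsym x y⟩
  have hbp : ∀ i, 0 < B (b i) (b i) := fun i => hpos _ (b.ne_zero i)
  let e := b.isUnitSMul (w := fun i => (Real.sqrt (B (b i) (b i)))⁻¹)
    (fun i => IsUnit.mk0 _ (inv_ne_zero (Real.sqrt_pos.2 (hbp i)).ne'))
  have he : ∀ i j, B (e i) (e j) = if i = j then 1 else 0 := by
    intro i j
    simp only [e, Module.Basis.isUnitSMul_apply, map_smul, LinearMap.smul_apply, smul_eq_mul]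
    split_ifs with h
    · subst h
      have h1 := Real.mul_self_sqrt (hbp i).le
      have h2 := (Real.sqrt_pos.2 (hbp i)).ne'
      rw [← mul_assoc, ← mul_inv, h1]
      exact inv_mul_cancel₀ (hbp i).ne'
    · have h0 : B (b i) (b j) = 0 := hb h
      rw [h0]; simp
  let T : En (Module.finrank ℝ V) ≃ₗ[ℝ] V :=
    (WithLp.linearEquiv 2 ℝ (Fin (Module.finrank ℝ V) → ℝ)).trans e.equivFun.symm
  have hT : ∀ y, T y = ∑ i, y i • e i := by
    intro y
    simp [T, Module.Basis.equivFun_symm_apply]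
  have hBT : ∀ y, B (T y) (T y) = ‖y‖ ^ 2 := by
    intro y
    rw [hT, EuclideanSpace.real_norm_sq_eq]
    simp only [map_sum, map_smul, LinearMap.sum_apply, LinearMap.smul_apply, smul_eq_mul, he]
    refine Finset.sum_congr rfl fun i _ => ?_
    simp [pow_two]
  let lam : En (Module.finrank ℝ V) := (InnerProductSpace.toDual ℝ _).symm
    (LinearMap.toContinuousLinearMap (l ∘ₗ T.toLinearMap))
  have hlam : ∀ y, l (T y) = ⟪lam, y⟫ := by
    intro y
    simp [lam]
  have hg : ∀ y, B (T y) (T y) + 2 * l (T y) + c = ‖y + lam‖ ^ 2 - (‖lam‖ ^ 2 - c) := by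
    intro y
    rw [hBT, hlam, norm_add_sq_real, real_inner_comm]
    ring
  have hρ : 0 < ‖lam‖ ^ 2 - c := by
    obtain ⟨y, rfl⟩ := T.surjective x₀
    rw [hg] at hx₀
    nlinarith [sq_nonneg ‖y + lam‖]
  set ρ := ‖lam‖ ^ 2 - c
  have hr : 0 < Real.sqrt ρ := Real.sqrt_pos.2 hρ
  have hrr : Real.sqrt ρ ^ 2 = ρ := Real.sq_sqrt hρ.le
  let f : En (Module.finrank ℝ V) →ᵃ[ℝ] V :=
    T.toLinearMap.toAffineMap.comp
      ((Real.sqrt ρ • LinearMap.id : En (Module.finrank ℝ V) →ₗ[ℝ] _).toAffineMap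
        - AffineMap.const ℝ _ lam)
  have hf : ∀ w, f w = T (Real.sqrt ρ • w - lam) := fun w => rfl
  refine ⟨f, ?_, ?_⟩
  · intro w w' h
    rw [hf, hf] at h
    have h1 := T.injective h
    have h2 : Real.sqrt ρ • w = Real.sqrt ρ • w' := sub_left_injective h1
    exact smul_right_injective _ hr.ne' h2
  · ext x
    constructor
    · intro hx
      obtain ⟨y, rfl⟩ := T.surjective x
      have hx' : B (T y) (T y) + 2 * l (T y) + c = 0 := hx
      rw [hg] at hx'
      refine ⟨(Real.sqrt ρ)⁻¹ • (y + lam), ?_, ?_⟩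
      · rw [mem_sphere_zero_iff_norm, norm_smul, norm_inv, Real.norm_of_nonneg hr.le]
        have : ‖y + lam‖ = Real.sqrt ρ := by
          rw [← Real.sqrt_sq (norm_nonneg (y + lam))]
          congr 1; linarith
        rw [this, inv_mul_cancel₀ hr.ne']
      · rw [hf, smul_smul, mul_inv_cancel₀ hr.ne', one_smul, add_sub_cancel_right]
    · rintro ⟨w, hw, rfl⟩
      change B (f w) (f w) + 2 * l (f w) + c = 0
      rw [hf, hg, sub_add_cancel, norm_smul, Real.norm_of_nonneg hr.le,
        mem_sphere_zero_iff_norm.1 hw, mul_one, hrr, sub_self]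

/-- Lemma 8: under the hypotheses of Theorem 2 with K strictly convex and
regular, there are two hyperplanes H(u₁), H(u₂) whose sections of the frontier of K are
(n−1)-dimensional ellipsoids intersecting in an (n−2)-dimensional ellipsoid. -/
theorem exist_two_ellipsoid_sections
    {n : ℕ} (hn : 3 ≤ n) (K : Set (En n)) (hKconv : Convex ℝ K) (hKcl : IsClosed K)
    (hKint : (interior K).Nonempty) (hKne : K ≠ Set.univ)
    (hKsc : IsStrictlyConvexSet K) (hKreg : IsRegularSet K)
    (δ : sphere (0 : En n) 1 → ℝ) (hδ : Continuous δ)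
    (hsec : ∀ u : sphere (0 : En n) 1,
      IsConvexQuadricIn (sphHyp δ u) (frontier K ∩ sphHyp δ u)) :
    ∃ u₁ u₂ : sphere (0 : En n) 1,
      IsEllipsoidDim (n - 1) (frontier K ∩ sphHyp δ u₁) ∧
      IsEllipsoidDim (n - 1) (frontier K ∩ sphHyp δ u₂) ∧
      IsEllipsoidDim (n - 2) ((frontier K ∩ sphHyp δ u₁) ∩ (frontier K ∩ sphHyp δ u₂)) := by
  have hmeets : ∀ u : sphere (0 : En n) 1, ∃ p ∈ interior K, ⟪p, (u : En n)⟫ = δ u := by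
    intro u
    obtain ⟨-, φ, hφ, hq⟩ := hsec u
    obtain ⟨⟨x, hx, y, hy, hxy⟩, -⟩ := quadric_aux (by omega) hq
    by_contra! h
    refine hKsc (φ x) hx.1 (φ y) hy.1 (fun he => hxy (φ.injective he)) ?_
    intro z hz
    have hzK : z ∈ K := hKconv.segment_subset (hKcl.frontier_subset hx.1)
      (hKcl.frontier_subset hy.1) hz
    refine ⟨subset_closure hzK, fun hzi => h z hzi ?_⟩
    obtain ⟨a, b, -, -, hab, rfl⟩ := hz
    have h1 : ⟪φ x, (u : En n)⟫ = δ u := hx.2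
    have h2 : ⟪φ y, (u : En n)⟫ = δ u := hy.2
    rw [inner_add_left, real_inner_smul_left, real_inner_smul_left, h1, h2, ← add_mul, hab, one_mul]
  obtain ⟨u₀, hu₀⟩ := exists_bounded_aux hKconv hKcl hKint hKne hKsc
  obtain ⟨p, hp, hpu⟩ := hmeets u₀
  obtain ⟨u₁, u₂, hb₁, hb₂, ⟨z, hzK, hz₁, hz₂⟩, w, hw₁, hw₂⟩ :=
    two_dirs_aux hn isOpen_interior δ hδ u₀ hp hpu hu₀
  have main : ∀ u : sphere (0 : En n) 1,
      (∀ d : ℝ, Bornology.IsBounded (K ∩ {x | ⟪x, (u : En n)⟫ = d})) →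
      ∃ (φ : En (n - 1) →ᵃⁱ[ℝ] En n) (B : LinearMap.BilinForm ℝ (En (n - 1)))
        (l : En (n - 1) →ₗ[ℝ] ℝ) (c : ℝ), Set.range φ = sphHyp δ u ∧
      (∀ x y, B x y = B y x) ∧ (∀ v, v ≠ 0 → 0 < B v v) ∧
      (∀ x, φ x ∈ frontier K ↔ B x x + 2 * l x + c = 0) ∧
      (∀ x, φ x ∈ interior K → B x x + 2 * l x + c < 0) := by
    intro u hu
    obtain ⟨-, φ, hφ, hq⟩ := hsec u
    obtain ⟨-, B, l, c, hsym, hB, hS⟩ := quadric_aux (by omega) hq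
    obtain ⟨B', l', c', h⟩ := section_aux (hu (δ u)) φ hφ (hmeets u) B l c hsym hB
      (fun x hx => hS x ⟨hx, by rw [← hφ]; exact ⟨x, rfl⟩⟩)
    exact ⟨φ, B', l', c', hφ, h⟩
  have ell : ∀ u : sphere (0 : En n) 1,
      (∀ d : ℝ, Bornology.IsBounded (K ∩ {x | ⟪x, (u : En n)⟫ = d})) →
      IsEllipsoidDim (n - 1) (frontier K ∩ sphHyp δ u) := by
    intro u hu
    obtain ⟨φ, B, l, c, hφ, hsym, hpos, hfr, hin⟩ := main u hu
    obtain ⟨q, hq, hqu⟩ := hmeets u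
    obtain ⟨y, rfl⟩ : q ∈ Set.range φ := by rw [hφ]; exact hqu
    obtain ⟨f, hf, hfs⟩ := ellipsoid_aux finrank_euclideanSpace_fin B l c hsym hpos y (hin y hq)
    refine ⟨φ.toAffineMap.comp f, φ.injective.comp hf, ?_⟩
    have : (φ.toAffineMap.comp f : En (n - 1) → En n) '' sphere 0 1
        = φ '' (f '' sphere 0 1) := by
      rw [← image_comp]; rfl
    rw [this, ← hfs]
    ext x
    constructor
    · rintro ⟨hx, hxH⟩
      rw [← hφ] at hxH
      obtain ⟨y, rfl⟩ := hxH
      exact ⟨y, (hfr y).1 hx, rfl⟩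
    · rintro ⟨y, hy, rfl⟩
      exact ⟨(hfr y).2 hy, by rw [← hφ]; exact ⟨y, rfl⟩⟩
  refine ⟨u₁, u₂, ell u₁ hb₁, ell u₂ hb₂, ?_⟩
  obtain ⟨φ, B, l, c, hφ, hsym, hpos, hfr, hin⟩ := main u₁ hb₁
  obtain ⟨y₀, rfl⟩ : z ∈ Set.range φ := by rw [hφ]; exact hz₁
  have hφv : ∀ (v : En (n - 1)), φ (y₀ + v) = φ y₀ + φ.linearIsometry v := by
    intro v
    have := φ.map_vadd y₀ v
    rw [vadd_eq_add, vadd_eq_add] at this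
    rw [add_comm y₀, this, add_comm]
  let L : Module.Dual ℝ (En (n - 1)) :=
    (innerₗ (En n) (u₂ : En n)) ∘ₗ φ.linearIsometry.toLinearMap
  have hL : ∀ v, L v = ⟪φ.linearIsometry v, (u₂ : En n)⟫ := by
    intro v
    rw [real_inner_comm]; rfl
  have hL0 : L ≠ 0 := by
    intro h
    have hmem : φ y₀ + w ∈ Set.range φ := by
      rw [hφ]
      change ⟪φ y₀ + w, (u₁ : En n)⟫ = δ u₁
      rw [inner_add_left, hw₁, hz₁, add_zero]
    obtain ⟨y, hy⟩ := hmem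
    have h1 := hφv (y - y₀)
    rw [add_sub_cancel, hy] at h1
    have h2 : w = φ.linearIsometry (y - y₀) := add_left_cancel h1
    apply hw₂
    rw [h2, ← hL, h, LinearMap.zero_apply]
  have hker : Module.finrank ℝ (LinearMap.ker L) = n - 2 := by
    have := Module.Dual.finrank_ker_add_one_of_ne_zero hL0
    rw [finrank_euclideanSpace_fin] at this
    omega
  obtain ⟨f, hf, hfs⟩ := ellipsoid_aux hker (B.restrict (LinearMap.ker L))
    ((l + B y₀) ∘ₗ (LinearMap.ker L).subtype) (B y₀ y₀ + 2 * l y₀ + c)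
    (fun x y => hsym x y) (fun v hv => hpos v (by simpa using hv)) 0
    (by simpa using hin y₀ hzK)
  have hval : ∀ v : LinearMap.ker L, (B.restrict (LinearMap.ker L)) v v
      + 2 * ((l + B y₀) ∘ₗ (LinearMap.ker L).subtype) v + (B y₀ y₀ + 2 * l y₀ + c)
      = B (y₀ + v) (y₀ + v) + 2 * l (y₀ + v) + c := by
    intro v
    simp only [LinearMap.BilinForm.restrict_apply, LinearMap.comp_apply, LinearMap.add_apply,
      Submodule.subtype_apply, map_add, LinearMap.domRestrict_apply]
    rw [hsym (v : En (n - 1)) y₀]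
    ring
  let ψ : LinearMap.ker L →ᵃ[ℝ] En (n - 1) :=
    AffineMap.const ℝ _ y₀ + (LinearMap.ker L).subtype.toAffineMap
  have hψ : ∀ v, ψ v = y₀ + (v : En (n - 1)) := fun v => rfl
  have hψi : Function.Injective ψ := by
    intro v v' h
    rw [hψ, hψ] at h
    exact Subtype.ext (add_left_cancel h)
  refine ⟨φ.toAffineMap.comp (ψ.comp f), φ.injective.comp (hψi.comp hf), ?_⟩
  have himg : (φ.toAffineMap.comp (ψ.comp f) : En (n - 2) → En n) '' sphere 0 1
      = (fun v => φ (ψ v)) '' (f '' sphere 0 1) := by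
    rw [← image_comp]; rfl
  rw [himg, ← hfs]
  ext x
  constructor
  · rintro ⟨⟨hx, hxH⟩, -, hxH₂⟩
    rw [← hφ] at hxH
    obtain ⟨y, rfl⟩ := hxH
    have h1 := hφv (y - y₀)
    rw [add_sub_cancel] at h1
    have h2 : y - y₀ ∈ LinearMap.ker L := by
      have h3 : ⟪φ y, (u₂ : En n)⟫ = δ u₂ := hxH₂
      rw [h1, inner_add_left, hz₂] at h3
      rw [LinearMap.mem_ker, hL]
      linarith
    refine ⟨⟨y - y₀, h2⟩, ?_, ?_⟩
    · refine (hval _).trans ?_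
      simp only [add_sub_cancel]
      exact (hfr y).1 hx
    · simp only [hψ, add_sub_cancel]
  · rintro ⟨v, hv, rfl⟩
    have h1 : φ (ψ v) ∈ frontier K := by
      rw [hψ]
      exact (hfr _).2 ((hval v).symm.trans hv)
    have h2 : φ (ψ v) ∈ sphHyp δ u₂ := by
      change ⟪φ (ψ v), (u₂ : En n)⟫ = δ u₂
      rw [hψ, hφv, inner_add_left, hz₂, ← hL, LinearMap.mem_ker.1 v.2, add_zero]
    exact ⟨⟨h1, by rw [← hφ]; exact ⟨_, rfl⟩⟩, h1, h2⟩
end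
end

section
/- Let n ≥ 3 and let K ⊆ ℝⁿ be a closed convex set with nonempty interior, K ≠ ℝⁿ, that is strictly convex and regular. Let δ : S^{n−1} → ℝ be continuous, H(u) = {x ∈ ℝⁿ : ⟨x, u⟩ = δ(u)}, and assume that for every u ∈ S^{n−1} the set frontier K ∩ H(u) is an (n−1)-dimensional convex quadric in H(u). If there exist a real quadric surface Q ⊆ ℝⁿ and a nonempty set A ⊆ frontier K ∩ Q that is open in the subspace topology of frontier K, then frontier K is a convex quadric. -/
open Set Metric RealInnerProductSpace

noncomputable section

section Abstract

open Topology Filter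

variable {E : Type*} [NormedAddCommGroup E] [NormedSpace ℝ E]

/-- Functions that are analytic and polynomial of degree at most two on each line. -/
def QF (q : E → ℝ) : Prop :=
  AnalyticOnNhd ℝ q univ ∧ ∀ (x v : E) (t : ℝ),
    q (x + t • v) = q x + t * ((q (x + v) - q (x - v)) / 2)
      + t ^ 2 * ((q (x + v) + q (x - v)) / 2 - q x)

lemma quad_three_roots {A B C s t : ℝ} (hs : 0 < s) (ht : 0 < t)
    (h0 : C = 0) (h1 : C + s * B + s ^ 2 * A = 0) (h2 : C + (-t) * B + (-t) ^ 2 * A = 0) :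
    A = 0 ∧ B = 0 := by
  subst h0
  have e1 : B + s * A = 0 := by
    have : s * (B + s * A) = 0 := by linarith
    exact (mul_eq_zero.1 this).resolve_left hs.ne'
  have e2 : B - t * A = 0 := by
    have : t * (B - t * A) = 0 := by linarith
    exact (mul_eq_zero.1 this).resolve_left ht.ne'
  have : (s + t) * A = 0 := by linarith
  have hA : A = 0 := (mul_eq_zero.1 this).resolve_left (by positivity)
  subst hA
  exact ⟨rfl, by linarith⟩

lemma subset_of_no_frontier {X : Type*} [TopologicalSpace X] {s u : Set X} (hs : IsPreconnected s)
    (hu : IsOpen u) (hne : (s ∩ u).Nonempty) (h : ∀ x ∈ s, x ∉ frontier u) : s ⊆ u := by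
  refine hs.subset_of_closure_inter_subset hu hne ?_
  rintro x ⟨hx, hxs⟩
  by_contra hxu
  exact h x hxs ⟨hx, by rwa [hu.interior_eq]⟩

/-- Basic facts on the gauge of a strictly convex set around an interior point. -/
lemma gauge_line {K : Set E} (hsc : StrictConvex ℝ K) (hcl : IsClosed K) (h0 : K ∈ 𝓝 (0 : E))
    (hne : K ≠ univ) {v : E} (h1 : gauge K v = 0) (h2 : gauge K (-v) = 0) : v = 0 := by
  by_contra hv
  have hc := hsc.convex
  have hfr : (frontier K).Nonempty :=
    nonempty_frontier_iff.2 ⟨⟨0, mem_of_mem_nhds h0⟩, hne⟩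
  obtain ⟨x, hx⟩ := hfr
  have habs : Absorbent ℝ K := absorbent_nhds_zero h0
  have hgx := (gauge_eq_one_iff_mem_frontier hc h0).2 hx
  have key : ∀ s : ℝ, 0 ≤ s → x + s • v ∈ frontier K := by
    intro s hs
    rw [← gauge_eq_one_iff_mem_frontier hc h0]
    apply le_antisymm
    · have := gauge_add_le hc habs x (s • v)
      rw [gauge_smul_of_nonneg hs, h1] at this
      simpa [hgx] using this
    · have := gauge_add_le hc habs (x + s • v) (s • (-v))
      rw [gauge_smul_of_nonneg hs, h2] at this
      simpa [hgx] using this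
  have hy := key 2 (by norm_num)
  have hz := key 1 (by norm_num)
  have hxy : x ≠ x + (2 : ℝ) • v := by simpa using hv
  have := hsc (hcl.frontier_subset hx) (hcl.frontier_subset hy) hxy
    (a := 1 / 2) (b := 1 / 2) (by norm_num) (by norm_num) (by norm_num)
  have e : (1 / 2 : ℝ) • x + (1 / 2 : ℝ) • (x + (2 : ℝ) • v) = x + (1 : ℝ) • v := by
    module
  rw [e] at this
  exact hz.2 this

lemma gauge_pos_preconnected (hr : 1 < Module.rank ℝ E) {K : Set E} (hsc : StrictConvex ℝ K)
    (hcl : IsClosed K) (h0 : K ∈ 𝓝 (0 : E)) (hne : K ≠ univ) :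
    IsPreconnected {v : E | 0 < gauge K v} := by
  have hc := hsc.convex
  have habs : Absorbent ℝ K := absorbent_nhds_zero h0
  have hneg : ∀ z : E, z ≠ 0 → gauge K z = 0 → 0 < gauge K (-z) := by
    intro z hz h
    rcases (gauge_nonneg (s := K) (-z)).lt_or_eq with h' | h'
    · exact h'
    · exact absurd (gauge_line hsc hcl h0 hne h h'.symm) hz
  let J : E → E → Prop := fun v w =>
    ∃ t ⊆ {v : E | 0 < gauge K v}, v ∈ t ∧ w ∈ t ∧ IsPreconnected t
  have Jtrans : ∀ u v w, J u v → J v w → J u w := by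
    rintro u v w ⟨s, hs, hu, hv, hsp⟩ ⟨t, ht, hv', hw, htp⟩
    exact ⟨s ∪ t, union_subset hs ht, Or.inl hu, Or.inr hw, hsp.union v hv hv' htp⟩
  have Jsymm : ∀ u v, J u v → J v u := by
    rintro u v ⟨s, hs, hu, hv, hsp⟩
    exact ⟨s, hs, hv, hu, hsp⟩
  have Jseg : ∀ v w, (∀ z ∈ segment ℝ v w, 0 < gauge K z) → J v w := fun v w h =>
    ⟨segment ℝ v w, h, left_mem_segment _ _ _, right_mem_segment _ _ _,
      (convex_segment v w).isPreconnected⟩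
  -- joining to `-z`
  have Jneg : ∀ v z, 0 < gauge K v → z ≠ 0 → gauge K z = 0 → J v (-z) := by
    intro v z hv hz hz0
    apply Jseg
    rintro y ⟨a, b, ha, hb, hab, rfl⟩
    rcases ha.lt_or_eq with ha | ha
    · have := gauge_add_le hc habs (a • v + b • -z) (b • z)
      rw [gauge_smul_of_nonneg hb, hz0] at this
      have e : a • v + b • -z + b • z = a • v := by module
      rw [e, gauge_smul_of_nonneg ha.le] at this
      have h2 : 0 < a * gauge K v := by positivity
      simp only [smul_eq_mul, mul_zero, add_zero] at this
      linarith
    · subst ha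
      have : b = 1 := by linarith
      subst this
      simpa using hneg z hz hz0
  have J1 : ∀ v w, 0 < gauge K v → 0 < gauge K w → (0 : E) ∉ segment ℝ v w → J v w := by
    intro v w hv hw h
    by_cases hall : ∀ z ∈ segment ℝ v w, 0 < gauge K z
    · exact Jseg v w hall
    · push Not at hall
      obtain ⟨z, hz, hz0⟩ := hall
      have hz0' : gauge K z = 0 := le_antisymm hz0 (gauge_nonneg _)
      have hzne : z ≠ 0 := by rintro rfl; exact h hz
      exact Jtrans _ _ _ (Jneg v z hv hzne hz0') (Jsymm _ _ (Jneg w z hw hzne hz0'))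
  apply isPreconnected_of_forall_pair
  intro v hv w hw
  change J v w
  by_cases h : (0 : E) ∈ segment ℝ v w
  · have hv0 : v ≠ 0 := by rintro rfl; simp at hv
    have hw0 : w ≠ 0 := by rintro rfl; simp at hw
    obtain ⟨e, he⟩ : ∃ e : E, e ∉ Submodule.span ℝ {v} := by
      by_contra! hcon
      have : Module.rank ℝ E ≤ 1 := by
        rw [rank_le_one_iff]
        exact ⟨v, fun w => Submodule.mem_span_singleton.1 (hcon w)⟩
      exact absurd hr (not_lt.2 this)
    obtain ⟨e, he, hge⟩ : ∃ e : E, e ∉ Submodule.span ℝ {v} ∧ 0 < gauge K e := by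
      by_cases hge : 0 < gauge K e
      · exact ⟨e, he, hge⟩
      · refine ⟨-e, by simpa using he, hneg e ?_ (le_antisymm (not_lt.1 hge) (gauge_nonneg _))⟩
        rintro rfl
        simp at he
    obtain ⟨a, b, ha, hb, hab, h⟩ := h
    have hb0 : b ≠ 0 := by
      rintro rfl
      have : a = 1 := by linarith
      subst this
      simp at h
      exact hv0 h
    have ha0 : a ≠ 0 := by
      rintro rfl
      have : b = 1 := by linarith
      subst this
      simp at h
      exact hw0 h
    have hwv : w ∈ Submodule.span ℝ {v} := by
      rw [Submodule.mem_span_singleton]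
      refine ⟨-(b⁻¹ * a), ?_⟩
      have : w = b⁻¹ • (b • w) := by rw [smul_smul, inv_mul_cancel₀ hb0, one_smul]
      rw [this, eq_neg_of_add_eq_zero_right h]
      module
    have gen : ∀ u ∈ Submodule.span ℝ {v}, u ≠ 0 → (0 : E) ∉ segment ℝ u e := by
      rintro u hu hu0 ⟨a, b, ha, hb, hab, h⟩
      by_cases hb0 : b = 0
      · subst hb0
        have : a = 1 := by linarith
        subst this
        simp at h
        exact hu0 h
      · apply he
        have : e = b⁻¹ • (b • e) := by rw [smul_smul, inv_mul_cancel₀ hb0, one_smul]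
        rw [this, eq_neg_of_add_eq_zero_right h]
        exact Submodule.smul_mem _ _ (Submodule.neg_mem _ (Submodule.smul_mem _ _ hu))
    exact Jtrans _ _ _ (J1 v e hv hge (gen v (Submodule.mem_span_singleton_self v) hv0))
      (Jsymm _ _ (J1 w e hw hge (gen w hwv hw0)))
  · exact J1 v w hv hw h

lemma frontier_preconnected_zero (hr : 1 < Module.rank ℝ E) {K : Set E} (hsc : StrictConvex ℝ K)
    (hcl : IsClosed K) (h0 : K ∈ 𝓝 (0 : E)) (hne : K ≠ univ) :
    IsPreconnected (frontier K) := by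
  have hc := hsc.convex
  have him : frontier K = (fun v => (gauge K v)⁻¹ • v) '' {v : E | 0 < gauge K v} := by
    ext x
    constructor
    · intro hx
      have := (gauge_eq_one_iff_mem_frontier hc h0).2 hx
      exact ⟨x, by simp [this], by simp [this]⟩
    · rintro ⟨v, hv, rfl⟩
      have hv : 0 < gauge K v := hv
      rw [← gauge_eq_one_iff_mem_frontier hc h0, gauge_smul_of_nonneg (by positivity)]
      simp [hv.ne']
  rw [him]
  apply (gauge_pos_preconnected hr hsc hcl h0 hne).image
  apply ContinuousOn.smul
  · exact (continuous_gauge hc h0).continuousOn.inv₀ (fun v hv => (ne_of_gt hv))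
  · exact continuousOn_id

/-- Zero set lemma, around the origin. -/
lemma zero_interior_zero (hr : 1 < Module.rank ℝ E) {K : Set E} (hsc : StrictConvex ℝ K)
    (hcl : IsClosed K) (h0 : K ∈ 𝓝 (0 : E)) (hne : K ≠ univ) {r : E → ℝ} (hr2 : QF r)
    (hfr : ∀ x ∈ frontier K, r x = 0) (hr0 : r 0 = 0) : r = 0 := by
  have hc := hsc.convex
  have hcg := continuous_gauge hc h0
  have hpre : IsPreconnected ({(0 : E)}ᶜ) := (isConnected_compl_singleton_of_one_lt_rank hr 0).isPreconnected
  have hnt : ∃ v : E, v ≠ 0 := by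
    have := (isConnected_compl_singleton_of_one_lt_rank hr (0 : E)).nonempty
    exact this
  have hor : ∀ v : E, v ≠ 0 → 0 < gauge K v ∨ 0 < gauge K (-v) := by
    intro v hv
    by_contra! h
    exact hv (gauge_line hsc hcl h0 hne (le_antisymm h.1 (gauge_nonneg _))
      (le_antisymm h.2 (gauge_nonneg _)))
  have hO1 : IsOpen {v : E | 0 < gauge K v} := isOpen_lt continuous_const hcg
  have hO2 : IsOpen {v : E | 0 < gauge K (-v)} :=
    isOpen_lt continuous_const (hcg.comp continuous_neg)
  have hpos0 : ∀ v : E, 0 < gauge K v → v ≠ 0 := by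
    rintro v hv rfl
    simp at hv
  have hex : ∃ v : E, v ≠ 0 ∧ 0 < gauge K v := by
    obtain ⟨v, hv⟩ := hnt
    rcases hor v hv with h | h
    · exact ⟨v, hv, h⟩
    · exact ⟨-v, neg_ne_zero.2 hv, h⟩
  obtain ⟨v, hv, hvp⟩ := hex
  obtain ⟨w, hw, hw1, hw2⟩ := hpre _ _ hO1 hO2 (fun v hv => hor v hv)
    ⟨v, hv, hvp⟩ ⟨-v, neg_ne_zero.2 hv, by simpa using hvp⟩
  have key : ∀ u ∈ {v : E | 0 < gauge K v} ∩ {v : E | 0 < gauge K (-v)}, r u = 0 := by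
    rintro u ⟨hu1, hu2⟩
    have hu1 : 0 < gauge K u := hu1
    have hu2 : 0 < gauge K (-u) := hu2
    have m1 : (0 : E) + (gauge K u)⁻¹ • u ∈ frontier K := by
      rw [zero_add, ← gauge_eq_one_iff_mem_frontier hc h0, gauge_smul_of_nonneg (by positivity)]
      simp [hu1.ne']
    have m2 : (0 : E) + (-(gauge K (-u))⁻¹) • u ∈ frontier K := by
      rw [zero_add, neg_smul, ← smul_neg, ← gauge_eq_one_iff_mem_frontier hc h0,
        gauge_smul_of_nonneg (by positivity)]
      simp [hu2.ne']
    have e1 := hr2.2 0 u (gauge K u)⁻¹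
    have e2 := hr2.2 0 u (-(gauge K (-u))⁻¹)
    rw [hfr _ m1] at e1
    rw [hfr _ m2] at e2
    obtain ⟨hA, hB⟩ := quad_three_roots (inv_pos.2 hu1) (inv_pos.2 hu2) hr0 e1.symm e2.symm
    have e3 := hr2.2 0 u 1
    rw [hA, hB, hr0] at e3
    simpa using e3
  refine hr2.1.eq_of_eventuallyEq (z₀ := w) (fun x _ => analyticAt_const) ?_
  filter_upwards [(hO1.inter hO2).mem_nhds ⟨hw1, hw2⟩] with u hu
  exact key u hu

lemma QF.translate {q : E → ℝ} (hq : QF q) (p : E) : QF (fun x => q (p + x)) := by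
  refine ⟨fun x _ => ?_, fun x v t => ?_⟩
  · have h1 : AnalyticAt ℝ (fun x : E => p + x) x := by fun_prop
    exact (hq.1 (p + x) (mem_univ _)).fun_comp h1
  · have := hq.2 (p + x) v t
    simpa only [add_assoc, add_sub_assoc] using this

lemma translate_facts {K : Set E} (hsc : StrictConvex ℝ K) (hcl : IsClosed K) {p : E}
    (hp : p ∈ interior K) (hne : K ≠ univ) :
    StrictConvex ℝ ((fun x => p + x) ⁻¹' K) ∧ IsClosed ((fun x => p + x) ⁻¹' K) ∧
    ((fun x => p + x) ⁻¹' K) ∈ 𝓝 (0 : E) ∧ ((fun x => p + x) ⁻¹' K) ≠ univ ∧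
    frontier ((fun x => p + x) ⁻¹' K) = (fun x => p + x) ⁻¹' frontier K := by
  refine ⟨hsc.preimage_add_right p, hcl.preimage (by fun_prop), ?_, ?_, ?_⟩
  · have : ContinuousAt (fun x : E => p + x) 0 := by fun_prop
    apply this
    simpa using mem_interior_iff_mem_nhds.1 hp
  · intro h
    apply hne
    ext x
    simp only [mem_univ, iff_true]
    have : x - p ∈ (fun x => p + x) ⁻¹' K := by rw [h]; trivial
    simpa using this
  · exact ((Homeomorph.addLeft p).preimage_frontier K).symm

lemma frontier_preconnected (hr : 1 < Module.rank ℝ E) {K : Set E} (hsc : StrictConvex ℝ K)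
    (hcl : IsClosed K) (hint : (interior K).Nonempty) (hne : K ≠ univ) :
    IsPreconnected (frontier K) := by
  obtain ⟨p, hp⟩ := hint
  obtain ⟨h1, h2, h3, h4, h5⟩ := translate_facts hsc hcl hp hne
  have := frontier_preconnected_zero hr h1 h2 h3 h4
  rw [h5] at this
  have h := this.image (fun x => p + x) (by fun_prop)
  rwa [image_preimage_eq _ (add_left_surjective p)] at h

lemma zero_interior (hr : 1 < Module.rank ℝ E) {K : Set E} (hsc : StrictConvex ℝ K)
    (hcl : IsClosed K) (hne : K ≠ univ) {r : E → ℝ} (hr2 : QF r)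
    (hfr : ∀ x ∈ frontier K, r x = 0) {p : E} (hp : p ∈ interior K) (hr0 : r p = 0) :
    r = 0 := by
  obtain ⟨h1, h2, h3, h4, h5⟩ := translate_facts hsc hcl hp hne
  have := zero_interior_zero hr h1 h2 h3 h4 (hr2.translate p)
    (by rw [h5]; intro x hx; exact hfr _ hx) (by simpa using hr0)
  funext x
  have := congrFun this (x - p)
  simpa using this

lemma exit_point {K : Set E} (hsc : StrictConvex ℝ K) (hcl : IsClosed K) {a y : E}
    (ha : a ∈ frontier K) (hy : y ∈ frontier K) (hay : a ≠ y) {W : Set E} (hW : W ∈ 𝓝 y) :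
    ∀ᶠ v in 𝓝 (y - a), ∃ t : ℝ, 0 < t ∧ a + t • v ∈ frontier K ∩ W := by
  have hcont : ContinuousAt (fun z : ℝ × E => a + z.1 • z.2) (1, y - a) := by fun_prop
  have hW' : ∀ᶠ z in 𝓝 ((1 : ℝ), y - a), a + z.1 • z.2 ∈ W := by
    apply hcont
    simpa using hW
  rw [nhds_prod_eq] at hW'
  obtain ⟨P, hP, R, hR, hPR⟩ := eventually_prod_iff.1 hW'
  obtain ⟨ε0, hε0, hball⟩ := Metric.eventually_nhds_iff.1 hP
  set ε := min (ε0 / 2) (1 / 2) with hε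
  have hεpos : 0 < ε := by positivity
  have hε1 : ε ≤ 1 / 2 := min_le_right _ _
  have hε2 : ε < ε0 := lt_of_le_of_lt (min_le_left _ _) (by linarith)
  have haK := hcl.frontier_subset ha
  have hyK := hcl.frontier_subset hy
  have hin : a + (1 - ε) • (y - a) ∈ interior K := by
    have := hsc haK hyK hay (a := ε) (b := 1 - ε) hεpos (by linarith) (by ring)
    convert this using 1
    module
  have hout : a + (1 + ε) • (y - a) ∉ K := by
    intro hK
    have hne : a ≠ a + (1 + ε) • (y - a) := by
      intro h
      have : (1 + ε) • (y - a) = 0 := by simpa using h.symm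
      rcases smul_eq_zero.1 this with h | h
      · linarith
      · exact hay (sub_eq_zero.1 h).symm
    have := hsc haK hK hne (a := ε / (1 + ε)) (b := 1 / (1 + ε)) (by positivity) (by positivity)
      (by field_simp; ring)
    apply hy.2
    convert this using 1
    have e : (1 / (1 + ε)) * (1 + ε) = 1 := by field_simp
    have e2 : ε / (1 + ε) + 1 / (1 + ε) = 1 := by field_simp; ring
    rw [smul_add, smul_smul, e, one_smul, ← add_assoc, ← add_smul, e2]
    simp
  have c1 : ContinuousAt (fun v : E => a + (1 - ε) • v) (y - a) := by fun_prop
  have c2 : ContinuousAt (fun v : E => a + (1 + ε) • v) (y - a) := by fun_prop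
  filter_upwards [hR, c1 (isOpen_interior.mem_nhds hin), c2 (hcl.isOpen_compl.mem_nhds hout)]
    with v hv1 hv2 hv3
  have hv2 : a + (1 - ε) • v ∈ interior K := hv2
  have hv3 : a + (1 + ε) • v ∉ K := hv3
  have hex : ∃ t ∈ Icc (1 - ε) (1 + ε), a + t • v ∈ frontier K := by
    by_contra! hcon
    have hs : IsPreconnected ((fun t : ℝ => a + t • v) '' Icc (1 - ε) (1 + ε)) :=
      isPreconnected_Icc.image _ (by fun_prop)
    have := subset_of_no_frontier hs (isOpen_interior (s := K))
      ⟨_, ⟨1 - ε, ⟨le_rfl, by linarith⟩, rfl⟩, hv2⟩ ?_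
    · exact hv3 (interior_subset (this ⟨1 + ε, ⟨by linarith, le_rfl⟩, rfl⟩))
    · rintro _ ⟨t, ht, rfl⟩ h
      exact hcon t ht (frontier_interior_subset h)
  obtain ⟨t, ht, htf⟩ := hex
  refine ⟨t, by linarith [ht.1], htf, hPR (x := t) (hball ?_) hv1⟩
  rw [Real.dist_eq, abs_lt]
  constructor <;> linarith [ht.1, ht.2]

/-- Key lemma in a section. -/
lemma section_lemma (hr : 1 < Module.rank ℝ E) {K : Set E} (hsc : StrictConvex ℝ K)
    (hcl : IsClosed K) (hint : (interior K).Nonempty) (hne : K ≠ univ) {r q : E → ℝ}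
    (hr2 : QF r) (hq2 : QF q) (hrne : r ≠ 0) (hfr : ∀ x ∈ frontier K, r x = 0) {a y : E}
    (ha : a ∈ frontier K) (hy : y ∈ frontier K) {W : Set E} (hW : IsOpen W) (haW : a ∈ W)
    (hq : ∀ x ∈ frontier K ∩ W, q x = 0) : q y = 0 := by
  by_cases hay : a = y
  · subst hay
    exact hq a ⟨ha, haW⟩
  have hqa := hq a ⟨ha, haW⟩
  have hra := hfr a ha
  have hpc := frontier_preconnected hr hsc hcl hint hne
  have hacc : AccPt a (𝓟 (frontier K)) :=
    hpc.preperfect_of_nontrivial ⟨a, ha, y, hy, hay⟩ a ha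
  obtain ⟨y0, ⟨hy0W, hy0⟩, hy0a⟩ := accPt_iff_nhds.1 hacc W (hW.mem_nhds haW)
  let α : E → ℝ := fun v => (r (a + v) + r (a - v)) / 2 - r a
  let β : E → ℝ := fun v => (r (a + v) - r (a - v)) / 2
  let α' : E → ℝ := fun v => (q (a + v) + q (a - v)) / 2 - q a
  let β' : E → ℝ := fun v => (q (a + v) - q (a - v)) / 2
  have rexp : ∀ (v : E) (t : ℝ), r (a + t • v) = t * β v + t ^ 2 * α v := by
    intro v t
    rw [hr2.2 a v t, hra]
    simp only [α, β, hra]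
    ring
  have qexp : ∀ (v : E) (t : ℝ), q (a + t • v) = t * β' v + t ^ 2 * α' v := by
    intro v t
    rw [hq2.2 a v t, hqa]
    simp only [α', β', hqa]
    ring
  have an1 : ∀ f : E → ℝ, QF f → AnalyticOnNhd ℝ (fun v => f (a + v)) univ := fun f hf =>
    (hf.translate a).1
  have an2 : ∀ f : E → ℝ, QF f → AnalyticOnNhd ℝ (fun v => f (a - v)) univ := by
    intro f hf x _
    have h1 : AnalyticAt ℝ (fun x : E => a - x) x := by fun_prop
    exact (hf.1 (a - x) (mem_univ _)).fun_comp h1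
  have hc : (fun v => α v * β' v - α' v * β v) = 0 := by
    refine AnalyticOnNhd.eq_of_eventuallyEq (𝕜 := ℝ) (z₀ := y0 - a) ?_
      (fun x _ => analyticAt_const) ?_
    · intro x _
      have r1 := an1 r hr2 x (mem_univ _)
      have r2 := an2 r hr2 x (mem_univ _)
      have q1 := an1 q hq2 x (mem_univ _)
      have q2 := an2 q hq2 x (mem_univ _)
      have d : ∀ f : E → ℝ, AnalyticAt ℝ f x → AnalyticAt ℝ (fun v => f v / 2) x :=
        fun f hf => hf.fun_div analyticAt_const (by norm_num)
      exact (((d _ (r1.fun_add r2)).fun_sub analyticAt_const).fun_mul (d _ (q1.fun_sub q2))).fun_sub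
        (((d _ (q1.fun_add q2)).fun_sub analyticAt_const).fun_mul (d _ (r1.fun_sub r2)))
    · filter_upwards [exit_point hsc hcl ha hy0 (Ne.symm hy0a) (hW.mem_nhds hy0W)] with v hv
      obtain ⟨t, ht, hf, hw⟩ := hv
      have e1 := rexp v t
      rw [hfr _ hf] at e1
      have e2 := qexp v t
      rw [hq _ ⟨hf, hw⟩] at e2
      have e1' : β v + t * α v = 0 :=
        (mul_eq_zero.1 (show t * (β v + t * α v) = 0 by linarith)).resolve_left ht.ne'
      have e2' : β' v + t * α' v = 0 :=
        (mul_eq_zero.1 (show t * (β' v + t * α' v) = 0 by linarith)).resolve_left ht.ne'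
      simp only [Pi.zero_apply]
      linear_combination α v * e2' - α' v * e1'
  have hcy : α (y - a) * β' (y - a) - α' (y - a) * β (y - a) = 0 := congrFun hc (y - a)
  have e1 := rexp (y - a) 1
  have e2 := qexp (y - a) 1
  have ea : a + (1 : ℝ) • (y - a) = y := by module
  rw [ea] at e1 e2
  rw [hfr y hy] at e1
  by_cases hα : α (y - a) = 0
  · exfalso
    have hβ : β (y - a) = 0 := by rw [hα] at e1; linarith
    have em := rexp (y - a) (1 / 2)
    rw [hα, hβ] at em
    have hm := hsc (hcl.frontier_subset ha) (hcl.frontier_subset hy) hay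
      (a := 1 / 2) (b := 1 / 2) (by norm_num) (by norm_num) (by norm_num)
    have e : (1 / 2 : ℝ) • a + (1 / 2 : ℝ) • y = a + (1 / 2 : ℝ) • (y - a) := by module
    rw [e] at hm
    exact hrne (zero_interior hr hsc hcl hne hr2 hfr hm (by simpa using em))
  · rw [e2]
    apply (mul_eq_zero.1 (show α (y - a) * (1 * β' (y - a) + 1 ^ 2 * α' (y - a)) = 0 from ?_)
      ).resolve_left hα
    linear_combination hcy - α' (y - a) * e1

end Abstract

section Poly

open Topology Filter

/-- The quadratic polynomial with given coefficients. -/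
def qpoly {n : ℕ} (a : Matrix (Fin n) (Fin n) ℝ) (b : Fin n → ℝ) (c : ℝ) (x : En n) : ℝ :=
  (∑ i, ∑ k, a i k * x i * x k) + 2 * (∑ i, b i * x i) + c

lemma QF.add {E : Type*} [NormedAddCommGroup E] [NormedSpace ℝ E] {f g : E → ℝ} (hf : QF f)
    (hg : QF g) : QF (fun x => f x + g x) := by
  refine ⟨fun x hx => (hf.1 x hx).fun_add (hg.1 x hx), fun x v t => ?_⟩
  simp only
  rw [hf.2 x v t, hg.2 x v t]
  ring

lemma QF.const_mul {E : Type*} [NormedAddCommGroup E] [NormedSpace ℝ E] {f : E → ℝ} (hf : QF f)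
    (c : ℝ) : QF (fun x => c * f x) := by
  refine ⟨fun x hx => analyticAt_const.fun_mul (hf.1 x hx), fun x v t => ?_⟩
  simp only
  rw [hf.2 x v t]
  ring

lemma QF.const {E : Type*} [NormedAddCommGroup E] [NormedSpace ℝ E] (c : ℝ) :
    QF (fun _ : E => c) :=
  ⟨fun _ _ => analyticAt_const, fun x v t => by simp⟩

lemma QF.sum {E ι : Type*} [NormedAddCommGroup E] [NormedSpace ℝ E] (s : Finset ι)
    {f : ι → E → ℝ} (hf : ∀ i, QF (f i)) : QF (fun x => ∑ i ∈ s, f i x) := by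
  classical
  induction s using Finset.induction_on with
  | empty => simpa using QF.const 0
  | insert i s his ih => simpa [Finset.sum_insert his] using (hf i).add ih

lemma coord_analytic {n : ℕ} (i : Fin n) (x : En n) : AnalyticAt ℝ (fun x : En n => x i) x :=
  (EuclideanSpace.proj (𝕜 := ℝ) i : En n →L[ℝ] ℝ).analyticAt x

lemma qpoly_QF {n : ℕ} (a : Matrix (Fin n) (Fin n) ℝ) (b : Fin n → ℝ) (c : ℝ) :
    QF (qpoly a b c) := by
  refine QF.add (QF.add (QF.sum _ fun i => QF.sum _ fun k => ?_)
    (QF.const_mul (QF.sum _ fun i => ?_) 2)) (QF.const c)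
  · refine ⟨fun x _ => (analyticAt_const.fun_mul (coord_analytic i x)).fun_mul (coord_analytic k x),
      fun x v t => ?_⟩
    simp only [PiLp.add_apply, PiLp.sub_apply, PiLp.smul_apply, smul_eq_mul]
    ring
  · refine ⟨fun x _ => analyticAt_const.fun_mul (coord_analytic i x), fun x v t => ?_⟩
    simp only [PiLp.add_apply, PiLp.sub_apply, PiLp.smul_apply, smul_eq_mul]
    ring

lemma qpoly_ne_zero {n : ℕ} {a : Matrix (Fin n) (Fin n) ℝ} (b : Fin n → ℝ) (c : ℝ)
    (hs : a.IsSymm) (ha : a ≠ 0) : qpoly a b c ≠ 0 := by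
  intro h
  apply ha
  have h0 : c = 0 := by
    have := congrFun h 0
    simpa [qpoly] using this
  have hB : ∀ x : En n, ∑ i, ∑ k, a i k * x i * x k = 0 := by
    intro x
    have h1 := congrFun h x
    have h2 := congrFun h (-x)
    simp [qpoly, h0] at h1 h2
    linarith
  have hd : ∀ i, a i i = 0 := by
    intro i
    have := hB (EuclideanSpace.single i 1)
    simpa using this
  ext i j
  have := hB (EuclideanSpace.single i 1 + EuclideanSpace.single j 1)
  simp [mul_add, Finset.sum_add_distrib, hd] at this
  have h2 := hs.apply i j
  simp only [Matrix.zero_apply]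
  linarith

lemma QF.comp_affine {m n : ℕ} {q : En n → ℝ} (hq : QF q) (φ : En m →ᵃⁱ[ℝ] En n) :
    QF (fun x => q (φ x)) := by
  refine ⟨fun x _ => ?_, fun x v t => ?_⟩
  · have h1 : AnalyticAt ℝ (fun x => φ x) x := by
      have e : (fun x => φ x) = fun x => φ.linearIsometry.toContinuousLinearMap x + φ 0 := by
        funext x
        have := φ.map_vadd 0 x
        simpa using this
      rw [e]
      exact (ContinuousLinearMap.analyticAt _ x).fun_add analyticAt_const
    exact (hq.1 (φ x) (mem_univ _)).fun_comp h1
  · have e : ∀ w, φ (x + w) = φ x + φ.linearIsometry w := by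
      intro w
      have := φ.map_vadd x w
      rw [vadd_eq_add, vadd_eq_add] at this
      rw [add_comm, this, add_comm]
    have := hq.2 (φ x) (φ.linearIsometry v) t
    simp only [sub_eq_add_neg, e, map_smul, map_neg]
    simpa only [sub_eq_add_neg] using this

lemma frontier_component {n : ℕ} {Q U : Set (En n)} (hQ : IsClosed Q)
    (hU : U ∈ componentsIn Qᶜ) : IsOpen U ∧ U.Nonempty ∧ frontier U ⊆ Q ∧ U ⊆ Qᶜ := by
  obtain ⟨x, hx, rfl⟩ := hU
  have ho : IsOpen (connectedComponentIn Qᶜ x) := hQ.isOpen_compl.connectedComponentIn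
  refine ⟨ho, ⟨x, mem_connectedComponentIn hx⟩, ?_, connectedComponentIn_subset _ _⟩
  intro z hz
  by_contra hzQ
  have hz' : z ∉ connectedComponentIn Qᶜ x := by
    have := hz.2
    rwa [ho.interior_eq] at this
  apply hz'
  have hp : IsPreconnected (insert z (connectedComponentIn Qᶜ x)) :=
    isPreconnected_connectedComponentIn.subset_closure (subset_insert _ _)
      (insert_subset hz.1 subset_closure)
  exact hp.subset_connectedComponentIn (mem_insert_of_mem _ (mem_connectedComponentIn hx))
    (insert_subset hzQ (connectedComponentIn_subset _ _)) (mem_insert _ _)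

lemma qpoly_closed {n : ℕ} (a : Matrix (Fin n) (Fin n) ℝ) (b : Fin n → ℝ) (c : ℝ) :
    IsClosed {x : En n | qpoly a b c x = 0} := by
  have : Continuous (qpoly a b c) := by
    rw [continuous_iff_continuousAt]
    intro x
    exact ((qpoly_QF a b c).1 x (mem_univ _)).continuousAt
  exact isClosed_eq this continuous_const

lemma frontier_not_subsingleton {E : Type*} [NormedAddCommGroup E] [NormedSpace ℝ E]
    (hr : 1 < Module.rank ℝ E) {U : Set E} (hU : IsOpen U) (hc : Convex ℝ U) (hne : U.Nonempty)
    {p : E} (h : frontier U = {p}) : False := by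
  have hp : p ∉ U := by
    have : p ∈ frontier U := by rw [h]; rfl
    have := this.2
    rwa [hU.interior_eq] at this
  have hcon := isConnected_compl_singleton_of_one_lt_rank hr p
  obtain ⟨o, ho⟩ := hne
  have hsub : ({p}ᶜ : Set E) ⊆ U := by
    refine subset_of_no_frontier hcon.isPreconnected hU ⟨o, ?_, ho⟩ ?_
    · rintro rfl
      exact hp ho
    · intro x hx
      rw [h]
      exact hx
  obtain ⟨w, hw⟩ := hcon.nonempty
  have hw : w ≠ p := hw
  have hw' : p + (p - w) ∈ U := by
    apply hsub
    intro h
    have h : p + (p - w) = p := h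
    exact hw (by simpa [sub_eq_zero, eq_comm] using h)
  have := hc (hsub hw) hw' (a := 1 / 2) (b := 1 / 2) (by norm_num) (by norm_num) (by norm_num)
  apply hp
  convert this using 1
  module

lemma rank_En {m : ℕ} (hm : 2 ≤ m) : 1 < Module.rank ℝ (En m) := by
  rw [← Module.finrank_eq_rank]
  simp
  omega

lemma sec_data {n : ℕ} (hn : 3 ≤ n) {K H : Set (En n)} (hsc : StrictConvex ℝ K)
    (hcl : IsClosed K) (h : IsConvexQuadricIn H (frontier K ∩ H)) :
    ∃ φ : En (n - 1) →ᵃⁱ[ℝ] En n, range φ = H ∧ (∃ o, φ o ∈ interior K) ∧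
      (∃ x, φ x ∈ frontier K) ∧
      ∃ r : En (n - 1) → ℝ, QF r ∧ r ≠ 0 ∧ ∀ x, φ x ∈ frontier K → r x = 0 := by
  obtain ⟨-, φ, hφ, Q, U, ⟨⟨a, b, c, hs, ha, rfl⟩, hQne⟩, hU, hUc, hUf⟩ := h
  have hpre : φ ⁻¹' (frontier K ∩ H) = φ ⁻¹' frontier K := by
    ext x
    simp [← hφ]
  rw [hpre] at hUf
  have hr := rank_En (m := n - 1) (by omega)
  obtain ⟨hUo, hUne, hUQ, hUQ'⟩ := frontier_component (qpoly_closed a b c) hU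
  have hUfne : (frontier U).Nonempty := by
    rw [nonempty_frontier_iff]
    refine ⟨hUne, ?_⟩
    rintro rfl
    obtain ⟨z, hz⟩ := hQne
    exact hUQ' (mem_univ z) hz
  refine ⟨φ, hφ, ?_, ?_, qpoly a b c, qpoly_QF a b c, qpoly_ne_zero b c hs ha, ?_⟩
  · by_contra! hcon
    obtain ⟨p, hp⟩ := hUfne
    refine frontier_not_subsingleton hr hUo hUc hUne (p := p) ?_
    apply Subset.antisymm _ (singleton_subset_iff.2 hp)
    intro z hz
    by_contra hzp
    have hzp : z ≠ p := hzp
    rw [← hUf] at hz hp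
    have := hsc (hcl.frontier_subset hz) (hcl.frontier_subset hp) (φ.injective.ne hzp)
      (a := 1 / 2) (b := 1 / 2) (by norm_num) (by norm_num) (by norm_num)
    apply hcon ((1 / 2 : ℝ) • z + (1 / 2 : ℝ) • p)
    have e := Convex.combo_affine_apply (f := φ.toAffineMap) (x := z) (y := p)
      (show (1 / 2 : ℝ) + 1 / 2 = 1 by norm_num)
    have e' : φ ((1 / 2 : ℝ) • z + (1 / 2 : ℝ) • p) = (1 / 2 : ℝ) • φ z + (1 / 2 : ℝ) • φ p := e
    rw [e']
    exact this
  · obtain ⟨p, hp⟩ := hUfne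
    rw [← hUf] at hp
    exact ⟨p, hp⟩
  · intro x hx
    have : x ∈ frontier U := by rw [← hUf]; exact hx
    exact hUQ this

lemma frontier_pre {m n : ℕ} {K : Set (En n)} (hsc : StrictConvex ℝ K) (hcl : IsClosed K)
    (φ : En m →ᵃⁱ[ℝ] En n) {o : En m} (ho : φ o ∈ interior K) :
    frontier (φ ⁻¹' K) = φ ⁻¹' frontier K := by
  have hint : interior (φ ⁻¹' K) = φ ⁻¹' interior K := by
    apply Subset.antisymm _ (preimage_interior_subset_interior_preimage φ.continuous)
    intro x hx
    have hcont : ContinuousAt (fun t : ℝ => x + t • (x - o)) 0 := by fun_prop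
    have hev : ∀ᶠ t in 𝓝 (0 : ℝ), x + t • (x - o) ∈ φ ⁻¹' K := by
      apply hcont
      simpa using mem_interior_iff_mem_nhds.1 hx
    obtain ⟨ε, hε, hb⟩ := Metric.eventually_nhds_iff.1 hev
    have hz := hb (y := ε / 2) (by rw [Real.dist_eq, sub_zero, abs_of_pos] <;> linarith)
    set t := ε / 2 with ht
    have htpos : 0 < t := by positivity
    have hz : φ (x + t • (x - o)) ∈ K := hz
    have := hsc.convex.combo_interior_self_mem_interior ho hz (a := t / (1 + t))
      (b := 1 / (1 + t)) (by positivity) (by positivity) (by field_simp; ring)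
    have e := Convex.combo_affine_apply (f := φ.toAffineMap) (x := o) (y := x + t • (x - o))
      (show t / (1 + t) + 1 / (1 + t) = 1 by field_simp; ring)
    have e' : φ ((t / (1 + t)) • o + (1 / (1 + t)) • (x + t • (x - o))) =
      (t / (1 + t)) • φ o + (1 / (1 + t)) • φ (x + t • (x - o)) := e
    rw [← e'] at this
    have e3 : (t / (1 + t)) • o + (1 / (1 + t)) • (x + t • (x - o)) = x := by
      have e4 : (t / (1 + t)) = 1 / (1 + t) * t := by ring
      have e5 : (1 / (1 + t)) * (1 + t) = 1 := by field_simp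
      rw [e4]
      calc _ = ((1 / (1 + t)) * (1 + t)) • x := by module
        _ = x := by rw [e5, one_smul]
    rw [e3] at this
    exact this
  rw [(hcl.preimage φ.continuous).frontier_eq, hint, hcl.frontier_eq]
  rfl

/-- A quadratic function vanishing near a point of a section vanishes on the section. -/
lemma section_vanish {n : ℕ} (hn : 3 ≤ n) {K H : Set (En n)} (hsc : StrictConvex ℝ K)
    (hcl : IsClosed K) (h : IsConvexQuadricIn H (frontier K ∩ H)) {q : En n → ℝ} (hq : QF q)
    {V : Set (En n)} (hV : IsOpen V) (hqV : ∀ x ∈ V ∩ frontier K, q x = 0) {a y : En n}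
    (haV : a ∈ V) (ha : a ∈ frontier K) (haH : a ∈ H) (hy : y ∈ frontier K) (hyH : y ∈ H) :
    q y = 0 := by
  obtain ⟨φ, hφ, ⟨o, ho⟩, ⟨x, hx⟩, r, hr, hrne, hrf⟩ := sec_data hn hsc hcl h
  rw [← hφ] at haH hyH
  obtain ⟨a, rfl⟩ := haH
  obtain ⟨y, rfl⟩ := hyH
  have hf := frontier_pre hsc hcl φ ho
  have hsc' : StrictConvex ℝ (φ ⁻¹' K) :=
    hsc.affine_preimage (f := φ.toAffineMap) φ.continuous φ.injective
  refine section_lemma (rank_En (m := n - 1) (by omega)) hsc' (hcl.preimage φ.continuous)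
    ⟨o, preimage_interior_subset_interior_preimage φ.continuous ho⟩ ?_ hr (hq.comp_affine φ) hrne
    (by rw [hf]; exact hrf) (a := a) (y := y) (by rw [hf]; exact ha) (by rw [hf]; exact hy)
    (hV.preimage φ.continuous) haV ?_
  · intro h
    rw [h, frontier_univ] at hf
    have : x ∈ φ ⁻¹' frontier K := hx
    rw [← hf] at this
    exact this
  · rintro z ⟨hz1, hz2⟩
    rw [hf] at hz1
    exact hqV _ ⟨hz2, hz1⟩

end Poly

section Normals

open Topology Filter

/-- Unit outward normals. -/
def IsNormal {n : ℕ} (K : Set (En n)) (x w : En n) : Prop :=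
  ‖w‖ = 1 ∧ ∀ z ∈ K, ⟪z - x, w⟫ ≤ 0

lemma IsNormal.neg_interior {n : ℕ} {K : Set (En n)} {x w p : En n} (h : IsNormal K x w)
    (hp : p ∈ interior K) : ⟪p - x, w⟫ < 0 := by
  have hcont : ContinuousAt (fun t : ℝ => p + t • w) 0 := by fun_prop
  have hev : ∀ᶠ t in 𝓝 (0 : ℝ), p + t • w ∈ K := by
    apply hcont
    simpa using mem_interior_iff_mem_nhds.1 hp
  obtain ⟨ε, hε, hb⟩ := Metric.eventually_nhds_iff.1 hev
  have hz := hb (y := ε / 2) (by rw [Real.dist_eq, sub_zero, abs_of_pos] <;> linarith)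
  have := h.2 _ hz
  have e : p + (ε / 2) • w - x = (p - x) + (ε / 2) • w := by abel
  rw [e, inner_add_left, inner_smul_left, real_inner_self_eq_norm_sq, h.1] at this
  simp at this
  linarith

lemma exists_normal {n : ℕ} {K : Set (En n)} (hc : Convex ℝ K)
    (hint : (interior K).Nonempty) {x : En n} (hx : x ∈ frontier K) : ∃ w, IsNormal K x w := by
  obtain ⟨f, hf⟩ := geometric_hahn_banach_open_point hc.interior isOpen_interior hx.2
  set v := (InnerProductSpace.toDual ℝ (En n)).symm f with hv
  have hfv : ∀ z, f z = ⟪z, v⟫ := by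
    intro z
    rw [real_inner_comm, hv, InnerProductSpace.toDual_symm_apply]
  have hv0 : v ≠ 0 := by
    intro h0
    obtain ⟨p, hp⟩ := hint
    have := hf p hp
    rw [hfv, hfv, h0] at this
    simp at this
  have hle : ∀ z ∈ K, f z ≤ f x := by
    intro z hz
    have hz' : z ∈ closure (interior K) := by
      rw [hc.closure_interior_eq_closure_of_nonempty_interior hint]
      exact subset_closure hz
    have hcl : IsClosed {z | f z ≤ f x} := isClosed_le f.continuous continuous_const
    exact closure_minimal (fun z hz => (hf z hz).le) hcl hz'
  refine ⟨‖v‖⁻¹ • v, ?_, ?_⟩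
  · rw [norm_smul, norm_inv, norm_norm, inv_mul_cancel₀ (norm_ne_zero_iff.2 hv0)]
  · intro z hz
    have := hle z hz
    rw [hfv, hfv] at this
    rw [inner_smul_right, inner_sub_left]
    exact mul_nonpos_of_nonneg_of_nonpos (by positivity) (by linarith)

lemma IsNormal.support {n : ℕ} {K : Set (En n)} {x w : En n} (h : IsNormal K x w) (hx : x ∈ K) :
    IsSupportHyperplaneAt K x {y : En n | ⟪y, w⟫ = ⟪x, w⟫} := by
  refine ⟨⟨w, _, ?_, rfl⟩, rfl, ⟨x, rfl, hx⟩, ?_⟩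
  · intro h0
    have := h.1
    simp [h0] at this
  · ext p
    simp only [mem_inter_iff, mem_ofPred_eq, mem_empty_iff_false, iff_false, not_and]
    intro hp hpi
    have := h.neg_interior hpi
    rw [inner_sub_left, hp] at this
    simp at this

lemma normal_unique {n : ℕ} {K : Set (En n)} (hcl : IsClosed K)
    (hint : (interior K).Nonempty) (hreg : IsRegularSet K) {x w₁ w₂ : En n}
    (hx : x ∈ frontier K) (h₁ : IsNormal K x w₁) (h₂ : IsNormal K x w₂) : w₁ = w₂ := by
  have hxK := hcl.frontier_subset hx
  have hG := (hreg x hx).unique (h₁.support hxK) (h₂.support hxK)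
  obtain ⟨p, hp⟩ := hint
  have n1 := h₁.neg_interior hp
  have n2 := h₂.neg_interior hp
  set c := ⟪w₂, w₁⟫ with hc
  have hz : x + (w₂ - c • w₁) ∈ {y : En n | ⟪y, w₁⟫ = ⟪x, w₁⟫} := by
    simp only [mem_ofPred_eq, inner_add_left, inner_sub_left, inner_smul_left,
      real_inner_self_eq_norm_sq, h₁.1]
    simp [hc]
  rw [hG] at hz
  have hz : ⟪x + (w₂ - c • w₁), w₂⟫ = ⟪x, w₂⟫ := hz
  simp only [inner_add_left, inner_sub_left, inner_smul_left,
    real_inner_self_eq_norm_sq, h₂.1] at hz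
  rw [real_inner_comm w₂ w₁, ← hc] at hz
  simp at hz
  have hcc : c * c = 1 := by linarith
  have hw : w₂ = c • w₁ := by
    have : ‖w₂ - c • w₁‖ ^ 2 = 0 := by
      rw [← real_inner_self_eq_norm_sq]
      simp only [inner_sub_left, inner_sub_right, inner_smul_left, inner_smul_right,
        real_inner_self_eq_norm_sq, h₁.1, h₂.1]
      rw [real_inner_comm w₂ w₁, ← hc]
      simp
      linarith
    exact sub_eq_zero.1 (norm_eq_zero.1 (pow_eq_zero_iff (two_ne_zero) |>.1 this))
  rw [hw, inner_smul_right] at n2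
  have hc0 : 0 < c := by
    by_contra hcon
    have := mul_nonneg_of_nonpos_of_nonpos (not_lt.1 hcon) n1.le
    linarith
  have hc1 : c = 1 := by nlinarith
  rw [hw, hc1, one_smul]

lemma normal_continuous {n : ℕ} {K : Set (En n)} (hcl : IsClosed K)
    (hint : (interior K).Nonempty) (hreg : IsRegularSet K) {x ν : En n}
    (hx : x ∈ frontier K) (hν : IsNormal K x ν) {ε : ℝ} (hε : 0 < ε) :
    ∀ᶠ a in 𝓝 x, ∀ w, IsNormal K a w → w ∈ ball ν ε := by
  have hcomp : IsCompact (sphere (0 : En n) 1 \ ball ν ε) :=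
    (isCompact_sphere 0 1).diff isOpen_ball
  have := hcomp.eventually_forall_of_forall_eventually (x₀ := x)
    (P := fun a w => ∃ z ∈ K, 0 < ⟪z - a, w⟫) ?_
  · filter_upwards [this] with a ha w hw
    by_contra hb
    obtain ⟨z, hz, hpos⟩ := ha w ⟨by simpa using hw.1, hb⟩
    exact absurd (hw.2 z hz) (not_le.2 hpos)
  · rintro w ⟨hw1, hw2⟩
    have hnot : ¬ IsNormal K x w := by
      intro h
      rw [normal_unique hcl hint hreg hx h hν] at hw2
      exact hw2 (mem_ball_self hε)
    have : ∃ z ∈ K, 0 < ⟪z - x, w⟫ := by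
      by_contra! hcon
      exact hnot ⟨by simpa using hw1, hcon⟩
    obtain ⟨z, hz, hpos⟩ := this
    have hcont : ContinuousAt (fun t : En n × En n => (⟪z - t.1, t.2⟫ : ℝ)) (x, w) := by fun_prop
    filter_upwards [hcont.eventually (lt_mem_nhds hpos)] with t ht
    exact ⟨z, hz, ht⟩

lemma exists_orth {n : ℕ} (hn : 3 ≤ n) (d w : En n) : ∃ e : En n, e ≠ 0 ∧ ⟪d, e⟫ = 0 ∧ ⟪w, e⟫ = 0 := by
  classical
  have h1 := Submodule.finrank_add_finrank_orthogonal (Submodule.span ℝ ({d, w} : Set (En n)))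
  have h2 : Module.finrank ℝ (Submodule.span ℝ ({d, w} : Set (En n))) ≤ 2 := by
    have := finrank_span_finset_le_card (R := ℝ) ({d, w} : Finset (En n))
    rw [Finset.coe_pair] at this
    exact this.trans Finset.card_le_two
  have h3 : Module.finrank ℝ (En n) = n := by simp
  have h4 : (Submodule.span ℝ ({d, w} : Set (En n)))ᗮ ≠ ⊥ := by
    intro h
    rw [h, finrank_bot] at h1
    omega
  obtain ⟨e, he, he0⟩ := Submodule.exists_mem_ne_zero_of_ne_bot h4
  rw [Submodule.mem_orthogonal] at he
  exact ⟨e, he0, he d (Submodule.subset_span (by simp)), he w (Submodule.subset_span (by simp))⟩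

lemma local_lemma {n : ℕ} (hn : 3 ≤ n) {K : Set (En n)} (hc : Convex ℝ K) (hcl : IsClosed K)
    (hint : (interior K).Nonempty) (hreg : IsRegularSet K)
    (δ : sphere (0 : En n) 1 → ℝ) (hδ : Continuous δ)
    (hmeet : ∀ u : sphere (0 : En n) 1, ∃ p ∈ interior K, p ∈ sphHyp δ u) {x : En n}
    (hx : x ∈ frontier K) :
    ∃ W : Set (En n), IsOpen W ∧ x ∈ W ∧ ∀ a ∈ W ∩ frontier K, ∀ y ∈ W ∩ frontier K, a ≠ y →
      ∃ u : sphere (0 : En n) 1, a ∈ sphHyp δ u ∧ y ∈ sphHyp δ u := by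
  obtain ⟨ν, hν⟩ := exists_normal hc hint hx
  obtain ⟨g, hg⟩ := ContinuousMap.exists_restrict_eq (isClosed_sphere (x := (0 : En n)) (ε := 1))
    (⟨δ, hδ⟩ : C(sphere (0 : En n) 1, ℝ))
  have hg' : ∀ u : sphere (0 : En n) 1, g u = δ u := fun u => by
    have := DFunLike.congr_fun hg u
    simpa using this
  let F : En n × En n → ℝ := fun t => g (‖t.2‖⁻¹ • t.2) - ⟪t.1, ‖t.2‖⁻¹ • t.2⟫
  have hF : ∀ t : En n × En n, t.2 ≠ 0 → ContinuousAt F t := by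
    intro t ht
    have h1 : ContinuousAt (fun t : En n × En n => ‖t.2‖⁻¹ • t.2) t :=
      ((continuous_snd.norm.continuousAt).inv₀ (norm_ne_zero_iff.2 ht)).smul
        continuous_snd.continuousAt
    have h2 : ContinuousAt (fun t : En n × En n => g (‖t.2‖⁻¹ • t.2)) t :=
      ContinuousAt.comp' g.continuous.continuousAt h1
    exact h2.sub (continuous_fst.continuousAt.inner h1)
  have hν0 : ν ≠ 0 := by
    intro h0
    have := hν.1
    simp [h0] at this
  have hF1 : F (x, ν) < 0 := by
    obtain ⟨p, hp, hpu⟩ := hmeet ⟨ν, by simpa using hν.1⟩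
    have hpu : ⟪p, ν⟫ = δ ⟨ν, by simpa using hν.1⟩ := hpu
    have := hν.neg_interior hp
    rw [inner_sub_left, hpu, ← hg'] at this
    simpa [F, hν.1] using this
  have hF2 : 0 < F (x, -ν) := by
    obtain ⟨p, hp, hpu⟩ := hmeet ⟨-ν, by simpa using hν.1⟩
    have hpu : ⟪p, -ν⟫ = δ ⟨-ν, by simpa using hν.1⟩ := hpu
    have := hν.neg_interior hp
    rw [← hg', inner_neg_right] at hpu
    rw [inner_sub_left] at this
    simp only [F, norm_neg, hν.1, inv_one, one_smul, inner_neg_right] at hpu ⊢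
    linarith
  have ev1 : ∀ᶠ t in 𝓝 (x, ν), F t < 0 := (hF (x, ν) hν0).eventually (gt_mem_nhds hF1)
  have ev2 : ∀ᶠ t in 𝓝 (x, ν), 0 < F (t.1, -t.2) := by
    have h1 : ContinuousAt (fun t : En n × En n => (t.1, -t.2)) (x, ν) := by fun_prop
    have h2 : ContinuousAt (fun t : En n × En n => F (t.1, -t.2)) (x, ν) :=
      ContinuousAt.comp' (hF (x, -ν) (neg_ne_zero.2 hν0)) h1
    exact h2.eventually (lt_mem_nhds hF2)
  have ev := ev1.and ev2
  rw [nhds_prod_eq] at ev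
  obtain ⟨P, hP, R, hR, hPR⟩ := eventually_prod_iff.1 ev
  obtain ⟨ε0, hε0, hball⟩ := Metric.eventually_nhds_iff.1 hR
  set ε := min ε0 1 with hε
  have hεpos : 0 < ε := by positivity
  have hnc := normal_continuous hcl hint hreg hx hν hεpos
  obtain ⟨W, hWsub, hWo, hxW⟩ := _root_.eventually_nhds_iff.1 (hP.and hnc)
  refine ⟨W, hWo, hxW, ?_⟩
  rintro a ⟨haW, ha⟩ y ⟨hyW, hy⟩ hay
  obtain ⟨νa, hνa⟩ := exists_normal hc hint ha
  obtain ⟨νy, hνy⟩ := exists_normal hc hint hy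
  have ba := (hWsub a haW).2 νa hνa
  have bY := (hWsub y hyW).2 νy hνy
  have ia : 0 ≤ ⟪a - y, νa⟫ := by
    have := hνa.2 y (hcl.frontier_subset hy)
    rw [inner_sub_left] at this ⊢
    linarith
  have iy : ⟪a - y, νy⟫ ≤ 0 := hνy.2 a (hcl.frontier_subset ha)
  obtain ⟨w, hwb, hwo⟩ : ∃ w ∈ ball ν ε, ⟪a - y, w⟫ = 0 := by
    have hcon : IsPreconnected (ball ν ε) := (convex_ball ν ε).isPreconnected
    have := hcon.intermediate_value bY ba (f := fun w => ⟪a - y, w⟫) (by fun_prop)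
    obtain ⟨w, hw, h⟩ := this ⟨iy, ia⟩
    exact ⟨w, hw, h⟩
  have hw0 : w ≠ 0 := by
    rintro rfl
    rw [mem_ball, dist_zero_left, hν.1] at hwb
    exact absurd hwb (not_lt.2 (min_le_right _ _))
  have hFw := hPR (x := y) (hWsub y hyW).1 (y := w)
    (hball (lt_of_lt_of_le hwb (min_le_left _ _)))
  obtain ⟨e, he0, hed, hew⟩ := exists_orth hn (a - y) w
  let γ : ℝ → En n := fun θ => Real.cos θ • w + Real.sin θ • e
  have hγ0 : ∀ θ, γ θ ≠ 0 := by
    intro θ h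
    have h1 : ⟪w, γ θ⟫ = 0 := by rw [h, inner_zero_right]
    have h2 : ⟪e, γ θ⟫ = 0 := by rw [h, inner_zero_right]
    have hew' : ⟪e, w⟫ = 0 := by rw [real_inner_comm]; exact hew
    simp only [γ, inner_add_right, inner_smul_right, hew, hew', real_inner_self_eq_norm_sq,
      mul_zero, add_zero, zero_add] at h1 h2
    have c0 : Real.cos θ = 0 := (mul_eq_zero.1 h1).resolve_right
      (pow_ne_zero _ (norm_ne_zero_iff.2 hw0))
    have s0 : Real.sin θ = 0 := (mul_eq_zero.1 h2).resolve_right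
      (pow_ne_zero _ (norm_ne_zero_iff.2 he0))
    have := Real.sin_sq_add_cos_sq θ
    rw [c0, s0] at this
    norm_num at this
  have hγc : Continuous γ := by fun_prop
  have hFc : Continuous (fun θ => F (y, γ θ)) := by
    rw [continuous_iff_continuousAt]
    intro θ
    have h1 : ContinuousAt (fun θ => (y, γ θ)) θ := by fun_prop
    exact ContinuousAt.comp' (hF (y, γ θ) (hγ0 θ)) h1
  have h0 : F (y, γ 0) ≤ 0 := by
    have : γ 0 = w := by simp [γ]
    rw [this]; exact hFw.1.le
  have hpi : 0 ≤ F (y, γ Real.pi) := by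
    have : γ Real.pi = -w := by simp [γ]
    rw [this]; exact hFw.2.le
  obtain ⟨θ, -, hθ⟩ := intermediate_value_Icc Real.pi_pos.le hFc.continuousOn ⟨h0, hpi⟩
  have hun : ‖‖γ θ‖⁻¹ • γ θ‖ = 1 := by
    rw [norm_smul, norm_inv, norm_norm, inv_mul_cancel₀ (norm_ne_zero_iff.2 (hγ0 θ))]
  let u : sphere (0 : En n) 1 := ⟨‖γ θ‖⁻¹ • γ θ, by simpa using hun⟩
  have hyu : ⟪y, (u : En n)⟫ = δ u := by
    rw [← hg']
    have : g (‖γ θ‖⁻¹ • γ θ) - ⟪y, ‖γ θ‖⁻¹ • γ θ⟫ = 0 := hθ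
    change ⟪y, ‖γ θ‖⁻¹ • γ θ⟫ = g (‖γ θ‖⁻¹ • γ θ)
    linarith
  refine ⟨u, ?_, hyu⟩
  have hau : ⟪a - y, (u : En n)⟫ = 0 := by
    change ⟪a - y, ‖γ θ‖⁻¹ • γ θ⟫ = 0
    simp only [γ, inner_smul_right, inner_add_right, hwo, hed]
    simp
  rw [inner_sub_left] at hau
  change ⟪a, (u : En n)⟫ = δ u
  linarith

end Normals

/-- Lemma 9: under the hypotheses of Theorem 2 with K strictly convex and
regular, if the frontier of K contains a nonempty relatively open piece of a real
quadric surface, then the frontier of K is a convex quadric. -/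
theorem frontier_convex_quadric_of_open_quadric_piece
    {n : ℕ} (hn : 3 ≤ n) (K : Set (En n)) (hKconv : Convex ℝ K) (hKcl : IsClosed K)
    (hKint : (interior K).Nonempty) (hKne : K ≠ Set.univ)
    (hKsc : IsStrictlyConvexSet K) (hKreg : IsRegularSet K)
    (δ : sphere (0 : En n) 1 → ℝ) (hδ : Continuous δ)
    (hsec : ∀ u : sphere (0 : En n) 1,
      IsConvexQuadricIn (sphHyp δ u) (frontier K ∩ sphHyp δ u))
    (hpiece : ∃ (Q A : Set (En n)), IsRealQuadricSurface Q ∧ A.Nonempty ∧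
      A ⊆ frontier K ∩ Q ∧ ∃ V : Set (En n), IsOpen V ∧ A = V ∩ frontier K) :
    IsConvexQuadric (frontier K) := by
  have hsc : StrictConvex ℝ K := by
    apply hKconv.strictConvex
    intro x hx y hy hxy
    rw [← hKcl.frontier_eq] at hx hy
    by_contra h
    rw [not_nonempty_iff_eq_empty, sdiff_eq_empty] at h
    exact hKsc x hx y hy hxy h
  have hr := rank_En (m := n) (by omega)
  have hmeet : ∀ u : sphere (0 : En n) 1, ∃ p ∈ interior K, p ∈ sphHyp δ u := by
    intro u
    obtain ⟨φ, hφ, ⟨o, ho⟩, -⟩ := sec_data hn hsc hKcl (hsec u)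
    exact ⟨φ o, ho, hφ ▸ mem_range_self o⟩
  obtain ⟨Q, A, hQ, ⟨a0, ha0⟩, hAQ, V0, hV0, hAV⟩ := hpiece
  have hQ' := hQ
  obtain ⟨⟨a, b, c, hs, ha, hQe⟩, hQne⟩ := hQ'
  have hQe : Q = {x : En n | qpoly a b c x = 0} := hQe
  have hqf := qpoly_QF a b c
  -- the largest open set whose trace on the frontier lies in `Q`
  have hpc := frontier_preconnected hr hsc hKcl hKint hKne
  let S : Set (Set (En n)) := {V | IsOpen V ∧ ∀ x ∈ V ∩ frontier K, qpoly a b c x = 0}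
  let S' : Set (Set (En n)) := {V | IsOpen V ∧ ∀ x ∈ V ∩ frontier K, x ∉ ⋃₀ S}
  have hcover : frontier K ⊆ ⋃₀ S ∪ ⋃₀ S' := by
    intro x hx
    obtain ⟨W, hWo, hxW, hW⟩ := local_lemma hn hKconv hKcl hKint hKreg δ hδ hmeet hx
    by_cases h : ∃ p ∈ W ∩ frontier K, p ∈ ⋃₀ S
    · left
      obtain ⟨p, hp, V, ⟨hVo, hV⟩, hpV⟩ := h
      refine ⟨W, ⟨hWo, fun y hy => ?_⟩, hxW⟩
      by_cases hpy : p = y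
      · subst hpy
        exact hV p ⟨hpV, hp.2⟩
      · obtain ⟨u, hu1, hu2⟩ := hW p hp y hy hpy
        exact section_vanish hn hsc hKcl (hsec u) hqf hVo hV hpV hp.2 hu1 hy.2 hu2
    · right
      push Not at h
      exact ⟨W, ⟨hWo, h⟩, hxW⟩
  have hfQ : ∀ x ∈ frontier K, qpoly a b c x = 0 := by
    intro x hx
    rcases hcover hx with ⟨V, ⟨hVo, hV⟩, hxV⟩ | hx'
    · exact hV x ⟨hxV, hx⟩
    · exfalso
      have ha0f := (hAQ ha0).1
      have ha0V : a0 ∈ V0 := by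
        rw [hAV] at ha0
        exact ha0.1
      have hV0S : V0 ∈ S := by
        refine ⟨hV0, fun y hy => ?_⟩
        rw [← hAV] at hy
        have := (hAQ hy).2
        rw [hQe] at this
        exact this
      obtain ⟨z, hz, hz1, V, ⟨hVo, hV⟩, hzV⟩ := hpc (⋃₀ S) (⋃₀ S')
        (isOpen_sUnion fun V hV => hV.1) (isOpen_sUnion fun V hV => hV.1) hcover
        ⟨a0, ha0f, V0, hV0S, ha0V⟩ ⟨x, hx, hx'⟩
      exact hV z ⟨hzV, hz⟩ hz1
  have hintQ : interior K ⊆ Qᶜ := by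
    intro p hp hpQ
    rw [hQe] at hpQ
    exact qpoly_ne_zero b c hs ha (zero_interior hr hsc hKcl hKne hqf hfQ hp hpQ)
  obtain ⟨p, hp⟩ := hKint
  have hfi : frontier (interior K) = frontier K := by
    rw [frontier, frontier, hKconv.closure_interior_eq_closure_of_nonempty_interior ⟨p, hp⟩,
      interior_interior]
  refine ⟨Q, interior K, hQ, ⟨p, hintQ hp, ?_⟩, hKconv.interior, hfi.symm⟩
  apply Subset.antisymm
  · exact hKconv.interior.isPreconnected.subset_connectedComponentIn hp hintQ
  · refine subset_of_no_frontier isPreconnected_connectedComponentIn isOpen_interior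
      ⟨p, mem_connectedComponentIn (hintQ hp), hp⟩ ?_
    intro x hx hxf
    rw [hfi] at hxf
    apply connectedComponentIn_subset _ _ hx
    rw [hQe]
    exact hfQ x hxf
end
end
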